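/- arXiv:2301.00085 — 4 statements merged into one kernel-verified Lean document; each statement's English description precedes it below -/
import Mathlib

section
/- Fix integers r ≥ 3 and d ≥ 2, and a real number 0 < c < (r−1)/r. Let z₂ be the unique positive real number satisfying z₂((z₂+1)^{r−1} − z₂^{r−1})/((z₂+1)^r − z₂^r) = c, and let z₁ := d/(r((z₂+1)^r − z₂^r)). Let h(x) := x log x. If h(d/r) + h(dc) + h(d(1−c)) − h(c) − h(1−c) − h(d) − (d/r) log z₁ − dc log z₂ < 0, then with high probability α(H_r(n,d)) < cn. -/
/-!
The proof is a first moment bound in the configuration model, in which the `d` copies of every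
vertex are placed at random into an `m × r` array, where `m r = d n`. The copies of the vertices of
`S` then occupy a uniformly random set of `d |S|` positions, and `S` is independent exactly when
this set contains no full row. Since `((z + 1) ^ r - z ^ r) ^ m` is the generating function of the
sets containing no full row, this has probability at most
`((z + 1) ^ r - z ^ r) ^ m / ((d n).choose (d |S|) * z ^ (d |S|))` for every `z > 0`.

Every `d`-regular `r`-uniform hypergraph arises from the same number `m! (r!) ^ m` of arrays, namely
the listings of its edges. By Markov's inequality at least half of all arrays have a bounded number
of defects, and every defect can be removed by exchanging one of its entries with an entry of a row
that is far away. So the listings are a polynomially large fraction of all arrays, and passing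
to hypergraphs costs only a polynomial factor.

The union bound is taken at the mode `s ≤ c n + 1` of the binomial distribution with parameters `n`
and `c`. There a binomial weight is at least `1 / (n + 1)`, which together with the inequality
`n.choose s ^ d ≤ (d n).choose (d s)` replaces Stirling's formula.
-/

open Finset Filter Real

open scoped Classical

/-- A set of vertices is independent if it contains no edge. -/
def IndepSet {n : ℕ} (E : Finset (Finset (Fin n))) (S : Finset (Fin n)) : Prop :=
  ∀ e ∈ E, ¬ e ⊆ S

/-- The independence number of the hypergraph with edge set `E`. -/
noncomputable def independenceNumber {n : ℕ} (E : Finset (Finset (Fin n))) : ℕ :=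
  sSup {s : ℕ | ∃ S : Finset (Fin n), S.card = s ∧ IndepSet E S}

/-- The family of all `d`-regular `r`-uniform hypergraphs on vertex set `Fin n`. -/
noncomputable def regularFamily (n r d : ℕ) : Finset (Finset (Finset (Fin n))) :=
  Finset.univ.filter (fun E : Finset (Finset (Fin n)) =>
    (∀ e ∈ E, e.card = r) ∧ ∀ v : Fin n, (E.filter (fun e => v ∈ e)).card = d)

/-- The probability that a uniformly random element of `family` satisfies `P`. -/
noncomputable def uniformProb {α : Type*} (family : Finset α) (P : α → Prop) : ℝ :=
  ((family.filter (fun x => P x)).card : ℝ) / (family.card : ℝ)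

section Counting

variable {α β : Type*}

lemma card_le_two_mul_card_filter_le (s : Finset α) (g : α → ℕ) (C : ℕ)
    (hsum : ∑ x ∈ s, g x ≤ C * #s) : #s ≤ 2 * #{x ∈ s | g x ≤ 2 * C} := by
  have hmarkov : (2 * C + 1) * #{x ∈ s | ¬ g x ≤ 2 * C} ≤ C * #s :=
    calc (2 * C + 1) * #{x ∈ s | ¬ g x ≤ 2 * C}
        ≤ ∑ x ∈ s with ¬ g x ≤ 2 * C, g x := by
          rw [mul_comm, ← smul_eq_mul]
          exact card_nsmul_le_sum _ _ _ fun x hx => not_le.1 (mem_filter.1 hx).2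
      _ ≤ ∑ x ∈ s, g x := sum_le_sum_of_subset (filter_subset _ s)
      _ ≤ C * #s := hsum
  have hsplit := card_filter_add_card_filter_not (s := s) (fun x => g x ≤ 2 * C)
  nlinarith

lemma card_filter_le_of_descent [Fintype β] (s : Finset α) (μ : α → ℕ) (T : β → α → α)
    (hT : ∀ x ∈ s, μ x ≠ 0 → ∃ b, ∃ y ∈ s, T b y = x ∧ μ y < μ x) (K : ℕ) :
    #{x ∈ s | μ x ≤ K} ≤ (Fintype.card β + 1) ^ K * #{x ∈ s | μ x = 0} := by
  induction K with
  | zero => simp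
  | succ K ih =>
    have hcover : {x ∈ s | μ x ≤ K + 1} ⊆
        {x ∈ s | μ x ≤ K} ∪ univ.biUnion fun b => {x ∈ s | μ x ≤ K}.image (T b) := by
      intro x hx
      obtain ⟨hxs, hxK⟩ := mem_filter.1 hx
      by_cases hx0 : μ x = 0
      · exact mem_union_left _ (mem_filter.2 ⟨hxs, by omega⟩)
      · obtain ⟨b, y, hys, rfl, hlt⟩ := hT x hxs hx0
        exact mem_union_right _ (mem_biUnion.2
          ⟨b, mem_univ b, mem_image_of_mem _ (mem_filter.2 ⟨hys, by omega⟩)⟩)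
    calc #{x ∈ s | μ x ≤ K + 1}
        ≤ #{x ∈ s | μ x ≤ K} + Fintype.card β * #{x ∈ s | μ x ≤ K} :=
          (card_le_card hcover).trans <| (card_union_le _ _).trans <|
            Nat.add_le_add_left (card_biUnion_le_card_mul _ _ _ fun _ _ => card_image_le) _
      _ = (Fintype.card β + 1) * #{x ∈ s | μ x ≤ K} := by ring
      _ ≤ (Fintype.card β + 1) * ((Fintype.card β + 1) ^ K * #{x ∈ s | μ x = 0}) := by gcongr
      _ = (Fintype.card β + 1) ^ (K + 1) * #{x ∈ s | μ x = 0} := by ring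

lemma uniformProb_nonneg (s : Finset α) (Q : α → Prop) : 0 ≤ uniformProb s Q := by
  unfold uniformProb
  positivity

lemma uniformProb_mono {s : Finset α} {Q R : α → Prop} (h : ∀ x ∈ s, Q x → R x) :
    uniformProb s Q ≤ uniformProb s R := by
  unfold uniformProb
  gcongr 2
  exact card_le_card fun x hx =>
    mem_filter.2 ⟨(mem_filter.1 hx).1, h x (mem_filter.1 hx).1 (mem_filter.1 hx).2⟩

lemma uniformProb_not {s : Finset α} (hs : s.Nonempty) (Q : α → Prop) :
    uniformProb s (fun x => ¬ Q x) = 1 - uniformProb s Q := by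
  have hpos : (#s : ℝ) ≠ 0 := by exact_mod_cast hs.card_ne_zero
  rw [uniformProb, uniformProb, eq_sub_iff_add_eq, ← add_div, div_eq_one_iff_eq hpos, add_comm]
  norm_cast
  convert card_filter_add_card_filter_not (s := s) Q

lemma uniformProb_exists_mem_le (s : Finset α) (t : Finset β) (Q : β → α → Prop) :
    uniformProb s (fun x => ∃ b ∈ t, Q b x) ≤ ∑ b ∈ t, uniformProb s (Q b) := by
  simp only [uniformProb]
  rw [← sum_div]
  gcongr
  have hcover : {x ∈ s | ∃ b ∈ t, Q b x} = t.biUnion fun b => {x ∈ s | Q b x} := by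
    ext x
    simp only [mem_filter, mem_biUnion]
    tauto
  rw [hcover]
  exact_mod_cast card_biUnion_le

lemma uniformProb_filter_le {s : Finset α} {R : α → Prop} (hs : s.Nonempty) {C : ℕ}
    (hC : #s ≤ C * #{x ∈ s | R x}) (Q : α → Prop) :
    uniformProb {x ∈ s | R x} Q ≤ C * uniformProb s Q := by
  have hR : 0 < #{x ∈ s | R x} := pos_of_mul_pos_right (hs.card_pos.trans_le hC) C.zero_le
  rw [uniformProb, uniformProb, ← mul_div_assoc, div_le_div_iff₀ (by exact_mod_cast hR)
    (by exact_mod_cast hs.card_pos), mul_right_comm, mul_comm (#_ : ℝ)]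
  gcongr
  · exact_mod_cast hC
  · exact filter_subset _ _

lemma uniformProb_comp_of_card_fiber_eq [DecidableEq β] {s : Finset α} {t : Finset β}
    {φ : α → β} (hs : s.Nonempty) (hφ : ∀ x ∈ s, φ x ∈ t)
    (hfiber : ∀ y ∈ t, ∀ y' ∈ t, #{x ∈ s | φ x = y} = #{x ∈ s | φ x = y'}) (Q : β → Prop) :
    uniformProb s (fun x => Q (φ x)) = uniformProb t Q := by
  have hQ : #{x ∈ s | Q (φ x)} = ∑ y ∈ t with Q y, #{x ∈ s | φ x = y} := by
    refine Eq.trans ?_ (sum_card_fiberwise_eq_card_filter s {y ∈ t | Q y} φ).symm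
    exact congrArg card (filter_congr fun x hx => by simp [hφ x hx])
  have hcard : ∀ y ∈ t, #{x ∈ s | φ x = y} * #t = #s := fun y hy => by
    rw [card_eq_sum_card_fiberwise hφ, sum_congr rfl fun y' hy' => hfiber y' hy' y hy,
      sum_const, smul_eq_mul, mul_comm]
  obtain ⟨x, hx⟩ := hs
  rw [uniformProb, uniformProb, div_eq_div_iff (by exact_mod_cast card_ne_zero_of_mem hx)
    (by exact_mod_cast card_ne_zero_of_mem (hφ x hx))]
  norm_cast
  rw [hQ, sum_mul, sum_congr rfl fun y hy => hcard y (mem_filter.1 hy).1, sum_const, smul_eq_mul]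

end Counting

section Configurations

variable {P V : Type*} [Fintype P]

/-- The set of positions holding a vertex of `S`. -/
noncomputable def positions (f : P → V) (S : Finset V) : Finset P := {p | f p ∈ S}

lemma mem_positions {f : P → V} {S : Finset V} {p : P} : p ∈ positions f S ↔ f p ∈ S := by
  simp [positions]

variable [Fintype V] {d : ℕ}

/-- The configuration model: the assignments of vertices to positions in which every vertex occurs
exactly `d` times. The `d` copies of a vertex are identified. -/
noncomputable def configurations (P V : Type*) [Fintype P] [Fintype V] (d : ℕ) : Finset (P → V) :=
  {f | ∀ v, #{p | f p = v} = d}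

lemma mem_configurations {f : P → V} : f ∈ configurations P V d ↔ ∀ v, #{p | f p = v} = d := by
  simp [configurations]

lemma comp_perm_mem_configurations {f : P → V} (hf : f ∈ configurations P V d)
    (σ : Equiv.Perm P) : f ∘ σ ∈ configurations P V d := by
  refine mem_configurations.2 fun v => ?_
  rw [← mem_configurations.1 hf v]
  exact card_equiv σ fun p => by simp

lemma configurations_nonempty (h : Fintype.card P = d * Fintype.card V) :
    (configurations P V d).Nonempty := by
  have e : P ≃ V × Fin d := Fintype.equivOfCardEq (by simp [h, mul_comm])
  refine ⟨fun p => (e p).1, mem_configurations.2 fun v => ?_⟩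
  calc #{p | (e p).1 = v} = #({v} ×ˢ (univ : Finset (Fin d))) :=
        card_equiv e fun p => by simp [Prod.ext_iff, eq_comm]
    _ = d := by simp

lemma card_positions {f : P → V} (hf : f ∈ configurations P V d) (S : Finset V) :
    #(positions f S) = d * #S := by
  rw [positions, ← sum_card_fiberwise_eq_card_filter,
    sum_congr rfl fun v _ => mem_configurations.1 hf v, sum_const, smul_eq_mul, mul_comm]

lemma card_filter_positions_eq_le (S : Finset V) {A B : Finset P} (hAB : #A = #B) :
    #{f ∈ configurations P V d | positions f S = A}
      ≤ #{f ∈ configurations P V d | positions f S = B} := by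
  let e : {p // p ∈ B} ≃ {p // p ∈ A} := Fintype.equivOfCardEq (by simp [hAB])
  have hmem : ∀ p, e.extendSubtype p ∈ A ↔ p ∈ B := fun p =>
    ⟨fun h => by_contra fun hp => e.extendSubtype_not_mem p hp h, e.extendSubtype_mem p⟩
  refine card_le_card_of_injOn (· ∘ e.extendSubtype) (fun f hf => ?_)
    fun f _ g _ h => e.extendSubtype.surjective.injective_comp_right h
  obtain ⟨hfd, rfl⟩ := mem_filter.1 (mem_coe.1 hf)
  refine mem_coe.2 (mem_filter.2 ⟨comp_perm_mem_configurations hfd _, ?_⟩)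
  ext p
  rw [← hmem, mem_positions, mem_positions]; rfl

lemma uniformProb_configurations_positions (hP : Fintype.card P = d * Fintype.card V)
    (S : Finset V) (Q : Finset P → Prop) :
    uniformProb (configurations P V d) (fun f => Q (positions f S)) =
      uniformProb (powersetCard (d * #S) univ) Q := by
  refine uniformProb_comp_of_card_fiber_eq (configurations_nonempty hP)
    (fun f hf => mem_powersetCard_univ.2 (card_positions hf S)) (fun A hA B hB => ?_) Q
  have hAB : #A = #B := (mem_powersetCard_univ.1 hA).trans (mem_powersetCard_univ.1 hB).symm
  exact le_antisymm (card_filter_positions_eq_le S hAB) (card_filter_positions_eq_le S hAB.symm)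

/- Exchanging the entries at `q` and at `x ∈ X` turns a configuration with `f p = f q` into one in
which `x` holds the vertex at `p`, so the result determines `x` up to `d` choices. -/
lemma card_mul_card_filter_eq_le {F : Finset (P → V)} (hF : F ⊆ configurations P V d) {p q : P}
    (hpq : p ≠ q) {X : Finset P} (hX : ∀ f ∈ F, ∀ x ∈ X, f ∘ Equiv.swap q x ∈ F) :
    #X * #{f ∈ F | f p = f q} ≤ d * #F := by
  rw [mul_comm #X, ← card_product]
  refine card_le_mul_card_image_of_maps_to (f := fun y => y.1 ∘ Equiv.swap q y.2)
    (fun y hy => ?_) d fun g hg => ?_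
  · obtain ⟨hf, hx⟩ := mem_product.1 hy
    exact hX y.1 (mem_filter.1 hf).1 y.2 hx
  rw [← mem_configurations.1 (hF hg) (g p)]
  refine card_le_card_of_injOn Prod.snd ?_ ?_
  · rintro ⟨f, x⟩ hy
    obtain ⟨hfx, rfl⟩ := mem_filter.1 (mem_coe.1 hy)
    have hf : f p = f q := (mem_filter.1 (mem_product.1 hfx).1).2
    by_cases hx : p = x
    · simp [hx]
    · simp [Equiv.swap_apply_of_ne_of_ne hpq hx, hf]
  · rintro ⟨f, x⟩ hy ⟨f', x'⟩ hy' rfl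
    have hcomp : f ∘ Equiv.swap q x = f' ∘ Equiv.swap q x :=
      (mem_filter.1 (mem_coe.1 hy)).2.trans (mem_filter.1 (mem_coe.1 hy')).2.symm
    rw [(Equiv.swap q x).surjective.injective_comp_right hcomp]

lemma card_mul_card_filter_coincidence_le {p q : P} (hpq : p ≠ q) :
    Fintype.card P * #{f ∈ configurations P V d | f p = f q} ≤ d * #(configurations P V d) :=
  card_mul_card_filter_eq_le (X := univ) Subset.rfl hpq
    fun _ hf x _ => comp_perm_mem_configurations hf (Equiv.swap q x)

lemma card_sq_mul_card_filter_coincidences_le (hP : 3 ≤ Fintype.card P) {p q p' q' : P}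
    (hpq : p ≠ q) (hpq' : p' ≠ q') (hqp' : q ≠ p') (hqq' : q ≠ q') :
    Fintype.card P ^ 2 * #{f ∈ configurations P V d | f p' = f q' ∧ f p = f q}
      ≤ 3 * d ^ 2 * #(configurations P V d) := by
  have hswitch : #(univ \ {p', q'} : Finset P) *
      #{f ∈ {f ∈ configurations P V d | f p' = f q'} | f p = f q}
        ≤ d * #{f ∈ configurations P V d | f p' = f q'} := by
    refine card_mul_card_filter_eq_le (filter_subset _ _) hpq fun f hf x hx => ?_
    obtain ⟨hf, hfp⟩ := mem_filter.1 hf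
    obtain ⟨hxp, hxq⟩ : x ≠ p' ∧ x ≠ q' := by simpa using hx
    refine mem_filter.2 ⟨comp_perm_mem_configurations hf _, ?_⟩
    simpa [Equiv.swap_apply_of_ne_of_ne hqp'.symm hxp.symm,
      Equiv.swap_apply_of_ne_of_ne hqq'.symm hxq.symm] using hfp
  have hthird : Fintype.card P ≤ 3 * #(univ \ {p', q'} : Finset P) := by
    rw [card_sdiff_of_subset (subset_univ _), card_pair hpq', card_univ]
    omega
  rw [filter_filter] at hswitch
  calc Fintype.card P ^ 2 * #{f ∈ configurations P V d | f p' = f q' ∧ f p = f q}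
      ≤ Fintype.card P * (3 * #(univ \ {p', q'} : Finset P)) *
          #{f ∈ configurations P V d | f p' = f q' ∧ f p = f q} := by rw [sq]; gcongr
    _ = 3 * (Fintype.card P * (#(univ \ {p', q'} : Finset P) *
          #{f ∈ configurations P V d | f p' = f q' ∧ f p = f q})) := by ring
    _ ≤ 3 * (Fintype.card P * (d * #{f ∈ configurations P V d | f p' = f q'})) := by gcongr
    _ = 3 * d * (Fintype.card P * #{f ∈ configurations P V d | f p' = f q'}) := by ring
    _ ≤ 3 * d * (d * #(configurations P V d)) :=
        Nat.mul_le_mul_left _ (card_mul_card_filter_coincidence_le hpq')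
    _ = 3 * d ^ 2 * #(configurations P V d) := by ring

end Configurations

section Listings

variable {ι κ V : Type*}

/-- The array that lists the edges of `E` in the order given by `σ` and the vertices of each edge in
the order given by `τ`. -/
def listing {E : Finset (Finset V)} (σ : ι ≃ E) (τ : ∀ i, κ ≃ (σ i).1) (p : ι × κ) : V :=
  τ p.1 p.2

variable {E : Finset (Finset V)} {σ : ι ≃ E} {τ : ∀ i, κ ≃ (σ i).1}

lemma exists_listing_eq_iff {i : ι} {v : V} : (∃ a, listing σ τ (i, a) = v) ↔ v ∈ (σ i).1 :=
  ⟨fun ⟨a, ha⟩ => ha ▸ (τ i a).2, fun hv => ⟨(τ i).symm ⟨v, hv⟩, by simp [listing]⟩⟩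

lemma listing_injective (E : Finset (Finset V)) : Function.Injective
    fun x : Σ σ : ι ≃ E, ∀ i, κ ≃ (σ i).1 => listing x.1 x.2 := by
  rintro ⟨σ, τ⟩ ⟨σ', τ'⟩ (h : listing σ τ = listing σ' τ')
  obtain rfl : σ = σ' := by
    ext i v
    rw [← exists_listing_eq_iff (τ := τ), h, exists_listing_eq_iff]
  obtain rfl : τ = τ' := by
    ext i a
    exact congrFun h (i, a)
  rfl

variable [Fintype κ]

/-- The set of vertices occurring in row `i` of the array `f`. -/
noncomputable def row (f : ι × κ → V) (i : ι) : Finset V := univ.image fun a => f (i, a)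

lemma mem_row {f : ι × κ → V} {i : ι} {v : V} : v ∈ row f i ↔ ∃ a, f (i, a) = v := by
  simp [row]

lemma apply_mem_row (f : ι × κ → V) (i : ι) (a : κ) : f (i, a) ∈ row f i := mem_row.2 ⟨a, rfl⟩

lemma card_row_le (f : ι × κ → V) (i : ι) : #(row f i) ≤ Fintype.card κ := card_image_le

lemma card_row {f : ι × κ → V} {i : ι} (h : Function.Injective fun a => f (i, a)) :
    #(row f i) = Fintype.card κ := by
  rw [row, card_image_of_injective _ h, card_univ]

/-- The arrays that list the edges of an `r`-uniform hypergraph without repetition, where `r` is the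
length of the rows. -/
def IsListing (f : ι × κ → V) : Prop :=
  (∀ i, Function.Injective fun a => f (i, a)) ∧ Function.Injective (row f)

lemma row_listing (i : ι) : row (listing σ τ) i = σ i := by
  ext v
  rw [mem_row, exists_listing_eq_iff]

lemma isListing_listing : IsListing (listing σ τ) := by
  refine ⟨fun i => Subtype.val_injective.comp (τ i).injective, fun i j hij => ?_⟩
  rw [row_listing, row_listing] at hij
  exact σ.injective (Subtype.ext hij)

variable [Fintype ι]

/-- The edge set of the hypergraph presented by an array, one edge per row. -/
noncomputable def edges (f : ι × κ → V) : Finset (Finset V) := univ.image (row f)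

variable {f : ι × κ → V}

lemma mem_edges {e : Finset V} : e ∈ edges f ↔ ∃ i, row f i = e := by simp [edges]

lemma edges_listing : edges (listing σ τ) = E := by
  ext e
  simp only [mem_edges, row_listing]
  exact ⟨fun ⟨i, hi⟩ => hi ▸ (σ i).2, fun he => ⟨σ.symm ⟨e, he⟩, by simp⟩⟩

lemma IsListing.exists_listing_eq (hf : IsListing f) :
    ∃ (σ : ι ≃ edges f) (τ : ∀ i, κ ≃ (σ i).1), listing σ τ = f := by
  let σ : ι ≃ edges f := Equiv.ofBijective (fun i => ⟨row f i, mem_edges.2 ⟨i, rfl⟩⟩)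
    ⟨fun i j hij => hf.2 (congrArg Subtype.val hij), fun ⟨e, he⟩ =>
      (mem_edges.1 he).imp fun i hi => Subtype.ext hi⟩
  let τ : ∀ i, κ ≃ (σ i).1 := fun i =>
    Equiv.ofBijective (fun a => ⟨f (i, a), apply_mem_row f i a⟩)
      ⟨fun a b hab => hf.1 i (congrArg Subtype.val hab), fun ⟨v, hv⟩ =>
        (mem_row.1 hv).imp fun a ha => Subtype.ext ha⟩
  exact ⟨σ, τ, rfl⟩

lemma IsListing.card_filter_mem_edges (hf : IsListing f) (v : V) :
    #{e ∈ edges f | v ∈ e} = #{p | f p = v} := by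
  refine (card_nbij (fun p => row f p.1) (fun p hp => ?_) ?_ fun e he => ?_).symm
  · obtain rfl : f p = v := by simpa using hp
    exact mem_filter.2 ⟨mem_edges.2 ⟨p.1, rfl⟩, apply_mem_row f p.1 p.2⟩
  · rintro ⟨i, a⟩ hp ⟨j, b⟩ hq hij
    obtain rfl : i = j := hf.2 hij
    exact congrArg _ (hf.1 i ((mem_filter.1 hp).2.trans (mem_filter.1 hq).2.symm))
  · obtain ⟨hedge, hv⟩ := mem_filter.1 (mem_coe.1 he)
    obtain ⟨i, rfl⟩ := mem_edges.1 hedge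
    obtain ⟨a, ha⟩ := mem_row.1 hv
    exact ⟨(i, a), by simpa using ha, rfl⟩

lemma card_filter_isListing_edges_eq [Fintype V] (hE : #E = Fintype.card ι)
    (hEκ : ∀ e ∈ E, #e = Fintype.card κ) :
    #{f : ι × κ → V | IsListing f ∧ edges f = E} =
      (Fintype.card ι).factorial * (Fintype.card κ).factorial ^ Fintype.card ι := by
  have himage : ({f | IsListing f ∧ edges f = E} : Finset (ι × κ → V)) =
      univ.image fun x : Σ σ : ι ≃ E, ∀ i, κ ≃ (σ i).1 => listing x.1 x.2 := by
    ext f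
    simp only [mem_filter, mem_univ, true_and, mem_image, Sigma.exists]
    constructor
    · rintro ⟨hf, rfl⟩
      exact hf.exists_listing_eq
    · rintro ⟨σ, τ, rfl⟩
      exact ⟨isListing_listing, edges_listing⟩
  have hτ : ∀ σ : ι ≃ E, Fintype.card (∀ i, κ ≃ (σ i).1) =
      (Fintype.card κ).factorial ^ Fintype.card ι := fun σ => by
    rw [Fintype.card_pi, prod_congr rfl fun i _ => Fintype.card_equiv
      (Fintype.equivOfCardEq (by simp [hEκ _ (σ i).2])), prod_const, card_univ]
  rw [himage, card_image_of_injective _ (listing_injective E), card_univ, Fintype.card_sigma,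
    sum_congr rfl fun σ _ => hτ σ, sum_const, card_univ, smul_eq_mul,
    Fintype.card_equiv (Fintype.equivOfCardEq (by simp [hE]))]

end Listings

section Arrays

variable {ι κ V : Type*} [Fintype κ]

/-- Two rows are far apart if no row, themselves included, meets both. -/
def FarRows (f : ι × κ → V) (i j : ι) : Prop :=
  ∀ k, Disjoint (row f i) (row f k) ∨ Disjoint (row f k) (row f j)

variable {f : ι × κ → V} {i j : ι} {a c : κ}

lemma row_comp_swap_of_ne {k : ι} (hki : k ≠ i) (hkj : k ≠ j) :
    row (f ∘ Equiv.swap (i, a) (j, c)) k = row f k := by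
  ext v
  simp [mem_row, Equiv.swap_apply_of_ne_of_ne, hki, hkj]

namespace FarRows

lemma symm (h : FarRows f i j) : FarRows f j i := fun k =>
  (h k).symm.imp (·.symm) (·.symm)

lemma disjoint [Nonempty κ] (h : FarRows f i j) : Disjoint (row f i) (row f j) := by
  refine (h i).resolve_left fun hi => ?_
  have a := Classical.arbitrary κ
  exact disjoint_left.1 hi (apply_mem_row f i a) (apply_mem_row f i a)

lemma ne [Nonempty κ] (h : FarRows f i j) : i ≠ j := by
  rintro rfl
  have a := Classical.arbitrary κ
  exact disjoint_left.1 h.disjoint (apply_mem_row f i a) (apply_mem_row f i a)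

lemma comp_swap_apply [Nonempty κ] (h : FarRows f i j) {b : κ} (hb : b ≠ a) :
    (f ∘ Equiv.swap (i, a) (j, c)) (i, b) = f (i, b) := by
  simp [Equiv.swap_apply_of_ne_of_ne, hb, h.ne]

lemma comp_swap_apply_ne [Nonempty κ] (h : FarRows f i j) {b : κ} (hb : b ≠ a) :
    (f ∘ Equiv.swap (i, a) (j, c)) (i, b) ≠ (f ∘ Equiv.swap (i, a) (j, c)) (i, a) := by
  rw [h.comp_swap_apply hb, Function.comp_apply, Equiv.swap_apply_left]
  exact fun heq => disjoint_left.1 h.disjoint (apply_mem_row f i b) (heq ▸ apply_mem_row f j c)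

lemma row_comp_swap_subset [Nonempty κ] (h : FarRows f i j) :
    row (f ∘ Equiv.swap (i, a) (j, c)) i ⊆ insert (f (j, c)) (row f i) := by
  intro v hv
  obtain ⟨b, rfl⟩ := mem_row.1 hv
  rcases eq_or_ne b a with rfl | hb
  · simp
  · rw [h.comp_swap_apply hb]
    exact mem_insert_of_mem (apply_mem_row f i b)

/- If `k = j`, the common vertices are the two exchanged ones. Otherwise row `k` was not changed, so
it meets row `j` in the entry that came from there and row `i` in any other entry. -/
lemma card_row_comp_swap_le_two [Nontrivial κ] (h : FarRows f i j) {k : ι} (hk : k ≠ i)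
    (hrow : row (f ∘ Equiv.swap (i, a) (j, c)) i = row (f ∘ Equiv.swap (i, a) (j, c)) k) :
    #(row (f ∘ Equiv.swap (i, a) (j, c)) i) ≤ 2 := by
  rcases eq_or_ne k j with rfl | hkj
  · refine (card_le_card fun v hv => ?_).trans (card_le_two (a := f (k, c)) (b := f (i, a)))
    have hvi := h.row_comp_swap_subset hv
    have hvk := h.symm.row_comp_swap_subset (Equiv.swap_comm (i, a) (k, c) ▸ hrow ▸ hv)
    rw [mem_insert] at hvi hvk
    rw [mem_insert, mem_singleton]
    exact hvi.imp_right fun hvi =>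
      hvk.resolve_right fun hvk => disjoint_left.1 h.disjoint hvi hvk
  · exfalso
    rw [row_comp_swap_of_ne hk hkj] at hrow
    obtain ⟨b, hb⟩ := exists_ne a
    have hki : f (i, b) ∈ row f k := hrow ▸ h.comp_swap_apply hb ▸ apply_mem_row _ i b
    have hkj : f (j, c) ∈ row f k := by
      simpa [hrow] using apply_mem_row (f ∘ Equiv.swap (i, a) (j, c)) i a
    rcases h k with hdisj | hdisj
    · exact disjoint_left.1 hdisj (apply_mem_row f i b) hki
    · exact disjoint_left.1 hdisj hkj (apply_mem_row f j c)

end FarRows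

variable [Fintype ι]

/-- The obstructions to `f` being a listing of the edges of a uniform hypergraph: pairs of positions
holding the same vertex that lie in one row, or in two rows with the same vertex set. Rows with at
most two vertices are left out of the second kind, since an exchange of entries can create such a
coincidence. -/
noncomputable def defects (f : ι × κ → V) : Finset ((ι × κ) × (ι × κ)) :=
  {x | x.1 ≠ x.2 ∧ f x.1 = f x.2 ∧
    (x.1.1 = x.2.1 ∨ 2 < #(row f x.1.1) ∧ row f x.1.1 = row f x.2.1)}

lemma mem_defects {p q : ι × κ} : (p, q) ∈ defects f ↔
    p ≠ q ∧ f p = f q ∧ (p.1 = q.1 ∨ 2 < #(row f p.1) ∧ row f p.1 = row f q.1) := by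
  simp [defects]

lemma swap_mem_defects {p q : ι × κ} (h : (p, q) ∈ defects f) : (q, p) ∈ defects f := by
  obtain ⟨hne, heq, hrow⟩ := mem_defects.1 h
  exact mem_defects.2 ⟨hne.symm, heq.symm, hrow.imp Eq.symm fun ⟨hcard, hrow⟩ =>
    ⟨hrow ▸ hcard, hrow.symm⟩⟩

lemma isListing_of_defects_eq_empty (hκ : 3 ≤ Fintype.card κ) (h : defects f = ∅) :
    IsListing f := by
  have hnot : ∀ p q, (p, q) ∉ defects f := by simp [h]
  have hrows : ∀ i, Function.Injective fun a => f (i, a) := fun i a b hab => by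
    by_contra hne
    exact hnot (i, a) (i, b) (mem_defects.2 ⟨by simp [hne], hab, Or.inl rfl⟩)
  refine ⟨hrows, fun i k hik => ?_⟩
  by_contra hne
  have hcard : 2 < #(row f i) := by rwa [card_row (hrows i)]
  obtain ⟨v, hv⟩ := card_pos.1 (two_pos.trans hcard)
  obtain ⟨a, ha⟩ := mem_row.1 hv
  obtain ⟨b, hb⟩ := mem_row.1 (hik ▸ hv)
  exact hnot (i, a) (k, b)
    (mem_defects.2 ⟨by simp [hne], ha.trans hb.symm, Or.inr ⟨hcard, hik⟩⟩)

namespace FarRows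

variable [Nontrivial κ] {p q : ι × κ}

lemma fst_ne_of_mem_defects (h : FarRows f i j)
    (hpq : (p, q) ∈ defects (f ∘ Equiv.swap (i, a) (j, c))) (hne : p.1 ≠ q.1) : p.1 ≠ i := by
  rintro rfl
  obtain ⟨-, -, hrow⟩ := mem_defects.1 hpq
  obtain ⟨hcard, hrow⟩ := hrow.resolve_left hne
  exact hcard.not_ge (h.card_row_comp_swap_le_two hne.symm hrow)

lemma ne_of_mem_defects (h : FarRows f i j)
    (hpq : (p, q) ∈ defects (f ∘ Equiv.swap (i, a) (j, c))) : p ≠ (i, a) := by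
  rintro rfl
  obtain ⟨k, b⟩ := q
  rcases eq_or_ne i k with rfl | hik
  · obtain ⟨hne, heq, -⟩ := mem_defects.1 hpq
    exact h.comp_swap_apply_ne (fun hba => hne (by rw [hba])) heq.symm
  · exact h.fst_ne_of_mem_defects hpq hik rfl

lemma defects_comp_swap_subset (h : FarRows f i j) :
    defects (f ∘ Equiv.swap (i, a) (j, c)) ⊆ defects f := by
  rintro ⟨p, q⟩ hpq
  have hpq' := Equiv.swap_comm (i, a) (j, c) ▸ hpq
  have hqp := swap_mem_defects hpq
  have hqp' := swap_mem_defects hpq'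
  obtain ⟨hne, heq, hrow⟩ := mem_defects.1 hpq
  refine mem_defects.2 ⟨hne, ?_, or_iff_not_imp_left.2 fun hfst => ?_⟩
  · simpa [Equiv.swap_apply_of_ne_of_ne (h.ne_of_mem_defects hpq) (h.symm.ne_of_mem_defects hpq'),
      Equiv.swap_apply_of_ne_of_ne (h.ne_of_mem_defects hqp) (h.symm.ne_of_mem_defects hqp')]
      using heq
  · simpa [hfst, row_comp_swap_of_ne (h.fst_ne_of_mem_defects hpq hfst)
        (h.symm.fst_ne_of_mem_defects hpq' hfst),
      row_comp_swap_of_ne (h.fst_ne_of_mem_defects hqp (Ne.symm hfst))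
        (h.symm.fst_ne_of_mem_defects hqp' (Ne.symm hfst))] using hrow

end FarRows

variable [Fintype V] {d : ℕ}

lemma exists_farRows (hf : f ∈ configurations (ι × κ) V d)
    (hι : (d * Fintype.card κ) ^ 2 < Fintype.card ι) (i : ι) : ∃ j, FarRows f i j := by
  let meeting : ι → Finset ι := fun k => {l | ¬ Disjoint (row f k) (row f l)}
  have hmeeting : ∀ k, #(meeting k) ≤ d * Fintype.card κ := fun k =>
    calc #(meeting k) ≤ #((positions f (row f k)).image Prod.fst) := card_le_card fun l hl => by
          obtain ⟨v, hvk, hvl⟩ := not_disjoint_iff.1 (mem_filter.1 hl).2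
          obtain ⟨b, rfl⟩ := mem_row.1 hvl
          exact mem_image.2 ⟨(l, b), mem_positions.2 hvk, rfl⟩
      _ ≤ d * #(row f k) := card_image_le.trans (card_positions hf _).le
      _ ≤ d * Fintype.card κ := Nat.mul_le_mul_left d (card_row_le f k)
  have hcard : #((meeting i).biUnion meeting) < #(univ : Finset ι) :=
    calc #((meeting i).biUnion meeting) ≤ #(meeting i) * (d * Fintype.card κ) :=
          card_biUnion_le_card_mul _ _ _ fun k _ => hmeeting k
      _ ≤ (d * Fintype.card κ) * (d * Fintype.card κ) := Nat.mul_le_mul_right _ (hmeeting i)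
      _ < #(univ : Finset ι) := by rwa [← sq, card_univ]
  obtain ⟨j, -, hj⟩ := exists_mem_notMem_of_card_lt_card hcard
  refine ⟨j, fun k => ?_⟩
  by_contra! hk
  exact hj (mem_biUnion.2 ⟨k, mem_filter.2 ⟨mem_univ k, hk.1⟩, mem_filter.2 ⟨mem_univ j, hk.2⟩⟩)

lemma exists_defects_comp_swap_ssubset [Nontrivial κ] (hf : f ∈ configurations (ι × κ) V d)
    (hι : (d * Fintype.card κ) ^ 2 < Fintype.card ι) (hdef : (defects f).Nonempty) :
    ∃ p q, defects (f ∘ Equiv.swap p q) ⊂ defects f := by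
  obtain ⟨⟨⟨i, a⟩, q⟩, hq⟩ := hdef
  obtain ⟨j, hj⟩ := exists_farRows hf hι i
  exact ⟨(i, a), (j, a), (ssubset_iff_of_subset hj.defects_comp_swap_subset).2
    ⟨_, hq, fun hmem => hj.ne_of_mem_defects hmem rfl⟩⟩

lemma card_filter_card_defects_le [Nontrivial κ]
    (hι : (d * Fintype.card κ) ^ 2 < Fintype.card ι) (K : ℕ) :
    #{f ∈ configurations (ι × κ) V d | #(defects f) ≤ K}
      ≤ (Fintype.card (ι × κ) ^ 2 + 1) ^ K *
        #{f ∈ configurations (ι × κ) V d | #(defects f) = 0} := by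
  rw [sq, ← Fintype.card_prod]
  refine card_filter_le_of_descent _ _ (fun x f => f ∘ Equiv.swap x.1 x.2) (fun f hf h0 => ?_) K
  obtain ⟨p, q, hpq⟩ := exists_defects_comp_swap_ssubset hf hι (card_ne_zero.1 h0)
  exact ⟨(p, q), f ∘ Equiv.swap p q, comp_perm_mem_configurations hf _, by ext; simp,
    card_lt_card hpq⟩

lemma card_mul_card_filter_mem_defects_le (p q : ι × κ) :
    Fintype.card (ι × κ) * #{f ∈ configurations (ι × κ) V d | (p, q) ∈ defects f}
      ≤ d * #(configurations (ι × κ) V d) := by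
  rcases eq_or_ne p q with rfl | hpq
  · simp [mem_defects]
  refine le_trans ?_ (card_mul_card_filter_coincidence_le hpq)
  gcongr with f
  exact fun hf => (mem_defects.1 hf).2.1

/- Two rows with the same vertex set, which has a second vertex, agree in two disjoint pairs of
positions. -/
lemma card_sq_mul_card_filter_mem_defects_le (hN : 3 ≤ Fintype.card (ι × κ)) {p q : ι × κ}
    (hpq : p.1 ≠ q.1) :
    Fintype.card (ι × κ) ^ 2 * #{f ∈ configurations (ι × κ) V d | (p, q) ∈ defects f}
      ≤ 3 * (d * Fintype.card κ) ^ 2 * #(configurations (ι × κ) V d) := by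
  obtain ⟨i, a₀⟩ := p
  obtain ⟨k, b₀⟩ := q
  let F : κ × κ → Finset (ι × κ → V) := fun y =>
    {f ∈ configurations (ι × κ) V d | f (i, y.1) = f (k, y.2) ∧ f (i, a₀) = f (k, b₀)}
  have hcover : {f ∈ configurations (ι × κ) V d | ((i, a₀), (k, b₀)) ∈ defects f} ⊆
      ({y | y.2 ≠ b₀} : Finset (κ × κ)).biUnion F := by
    intro f hf
    obtain ⟨hf, hdef⟩ := mem_filter.1 hf
    obtain ⟨-, heq, hrow⟩ := mem_defects.1 hdef
    obtain ⟨hcard, hrow⟩ := hrow.resolve_left hpq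
    obtain ⟨v, hvi, hv⟩ := exists_mem_ne (one_lt_two.trans hcard) (f (i, a₀))
    obtain ⟨a, rfl⟩ := mem_row.1 hvi
    obtain ⟨b, hb⟩ := mem_row.1 (hrow ▸ hvi)
    refine mem_biUnion.2 ⟨(a, b), mem_filter.2 ⟨mem_univ _, ?_⟩,
      mem_filter.2 ⟨hf, hb.symm, heq⟩⟩
    rintro rfl
    exact hv (hb.symm.trans heq.symm)
  calc Fintype.card (ι × κ) ^ 2 *
        #{f ∈ configurations (ι × κ) V d | ((i, a₀), (k, b₀)) ∈ defects f}
      ≤ Fintype.card (ι × κ) ^ 2 * ∑ y : κ × κ with y.2 ≠ b₀, #(F y) :=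
        Nat.mul_le_mul_left _ ((card_le_card hcover).trans card_biUnion_le)
    _ ≤ ∑ y : κ × κ with y.2 ≠ b₀, 3 * d ^ 2 * #(configurations (ι × κ) V d) := by
        rw [mul_sum]
        refine sum_le_sum fun y hy => ?_
        have hyb : y.2 ≠ b₀ := (mem_filter.1 hy).2
        exact card_sq_mul_card_filter_coincidences_le hN (by simp [hpq]) (by simp [hpq])
          (by simp [Ne.symm hpq]) (by simp [hyb.symm])
    _ ≤ ∑ _y : κ × κ, 3 * d ^ 2 * #(configurations (ι × κ) V d) :=
        sum_le_sum_of_subset (filter_subset _ _)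
    _ = 3 * (d * Fintype.card κ) ^ 2 * #(configurations (ι × κ) V d) := by
        rw [sum_const, card_univ, Fintype.card_prod, smul_eq_mul]
        ring

lemma card_filter_fst_fst_eq :
    #{x : (ι × κ) × (ι × κ) | x.1.1 = x.2.1} = Fintype.card (ι × κ) * Fintype.card κ := by
  rw [← Fintype.card_prod (ι × κ), ← card_univ]
  refine card_nbij' (fun x => (x.1, x.2.2)) (fun y => (y.1, (y.1.1, y.2))) (by simp)
    (by simp) (fun ⟨p, q⟩ hx => ?_) fun _ _ => rfl
  exact Prod.ext rfl (Prod.ext (mem_filter.1 hx).2 rfl)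

lemma sum_card_defects_le (hN : 3 ≤ Fintype.card (ι × κ)) :
    ∑ f ∈ configurations (ι × κ) V d, #(defects f) ≤
      (d * Fintype.card κ + 3 * (d * Fintype.card κ) ^ 2) * #(configurations (ι × κ) V d) := by
  set N := Fintype.card (ι × κ)
  set T := #(configurations (ι × κ) V d)
  have hpair : ∀ x : (ι × κ) × (ι × κ),
      N ^ 2 * #{f ∈ configurations (ι × κ) V d | x ∈ defects f} ≤
        (if x.1.1 = x.2.1 then N * (d * T) else 0) + 3 * (d * Fintype.card κ) ^ 2 * T := by
    rintro ⟨p, q⟩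
    split_ifs with hpq
    · rw [sq, mul_assoc]
      exact le_add_right (Nat.mul_le_mul_left N (card_mul_card_filter_mem_defects_le p q))
    · exact le_add_left (card_sq_mul_card_filter_mem_defects_le hN hpq)
  have hcount : ∑ f ∈ configurations (ι × κ) V d, #(defects f) =
      ∑ x, #{f ∈ configurations (ι × κ) V d | x ∈ defects f} := by
    simpa [bipartiteAbove, bipartiteBelow] using
      sum_card_bipartiteAbove_eq_sum_card_bipartiteBelow (s := configurations (ι × κ) V d)
        (t := univ) fun f x => x ∈ defects f
  refine Nat.le_of_mul_le_mul_left (c := N ^ 2) ?_ (by positivity)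
  calc N ^ 2 * ∑ f ∈ configurations (ι × κ) V d, #(defects f)
      ≤ ∑ x : (ι × κ) × (ι × κ),
          ((if x.1.1 = x.2.1 then N * (d * T) else 0) + 3 * (d * Fintype.card κ) ^ 2 * T) := by
        rw [hcount, mul_sum]
        exact sum_le_sum fun x _ => hpair x
    _ = N * Fintype.card κ * (N * (d * T)) + N * N * (3 * (d * Fintype.card κ) ^ 2 * T) := by
        rw [sum_add_distrib, ← sum_filter, sum_const, card_filter_fst_fst_eq, sum_const, card_univ,
          Fintype.card_prod (ι × κ), smul_eq_mul, smul_eq_mul]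
    _ = N ^ 2 * ((d * Fintype.card κ + 3 * (d * Fintype.card κ) ^ 2) * T) := by ring

lemma card_configurations_le (hκ : 3 ≤ Fintype.card κ)
    (hι : (d * Fintype.card κ) ^ 2 < Fintype.card ι) :
    #(configurations (ι × κ) V d) ≤
      2 * ((Fintype.card (ι × κ) ^ 2 + 1) ^
          (2 * (d * Fintype.card κ + 3 * (d * Fintype.card κ) ^ 2)) *
        #{f ∈ configurations (ι × κ) V d | IsListing f}) := by
  have : Nontrivial κ := Fintype.one_lt_card_iff_nontrivial.1 (by omega)
  have hN : 3 ≤ Fintype.card (ι × κ) := by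
    rw [Fintype.card_prod]
    exact hκ.trans (Nat.le_mul_of_pos_left _ (by omega))
  refine (card_le_two_mul_card_filter_le _ _ _ (sum_card_defects_le hN)).trans
    (Nat.mul_le_mul_left 2 ((card_filter_card_defects_le hι _).trans ?_))
  gcongr with f
  exact fun h => isListing_of_defects_eq_empty hκ (card_eq_zero.1 h)

lemma exists_isListing_mem_configurations (hκ : 3 ≤ Fintype.card κ)
    (hι : (d * Fintype.card κ) ^ 2 < Fintype.card ι)
    (hcard : Fintype.card (ι × κ) = d * Fintype.card V) :
    {f ∈ configurations (ι × κ) V d | IsListing f}.Nonempty := by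
  refine nonempty_iff_ne_empty.2 fun hempty => (configurations_nonempty hcard).card_pos.not_ge ?_
  simpa [hempty] using card_configurations_le hκ hι (V := V)

end Arrays

section GeneratingFunction

variable {ι κ : Type*}

/-- The sets of positions that contain no row. For the positions of the vertices of `S` in a listing
of the edges of a hypergraph, this says that `S` is independent. -/
def NoFullRow (A : Finset (ι × κ)) : Prop := ∀ i, ∃ a, (i, a) ∉ A

variable [Fintype κ]

lemma sum_pow_card_ne_univ {R : Type*} [CommRing R] (z : R) :
    ∑ B : Finset κ with B ≠ univ, z ^ #B = (z + 1) ^ Fintype.card κ - z ^ Fintype.card κ := by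
  rw [eq_sub_iff_add_eq, filter_ne', ← card_univ, sum_erase_add _ _ (mem_univ univ),
    ← sum_pow_mul_eq_add_pow, powerset_univ]
  simp

variable [Fintype ι]

/- A subset of `ι × κ` is a family of subsets of `κ`, one for each row. -/
lemma sum_pow_card_noFullRow {R : Type*} [CommRing R] (z : R) :
    ∑ A : Finset (ι × κ) with NoFullRow A, z ^ #A =
      ((z + 1) ^ Fintype.card κ - z ^ Fintype.card κ) ^ Fintype.card ι := by
  rw [← sum_pow_card_ne_univ, ← card_univ, ← prod_const, prod_univ_sum]
  refine sum_nbij' (fun A i => {a | (i, a) ∈ A})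
    (fun B => ({p | p.2 ∈ B p.1} : Finset (ι × κ))) ?_ ?_ ?_ ?_ ?_
  · intro A hA
    simpa [NoFullRow, eq_univ_iff_forall] using (mem_filter.1 hA).2
  · intro B hB
    refine mem_filter.2 ⟨mem_univ _, fun i => ?_⟩
    simpa [eq_univ_iff_forall] using Fintype.mem_piFinset.1 hB i
  · intro A _; ext; simp
  · intro B _; ext; simp
  · intro A _
    rw [prod_pow_eq_pow_sum]
    congr 1
    simp only [card_filter]
    rw [← Fintype.sum_prod_type']
    simp

lemma uniformProb_powersetCard_noFullRow_le {z : ℝ} (hz : 0 < z) (k : ℕ) :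
    uniformProb (powersetCard k (univ : Finset (ι × κ))) NoFullRow ≤
      ((z + 1) ^ Fintype.card κ - z ^ Fintype.card κ) ^ Fintype.card ι /
        ((Fintype.card (ι × κ)).choose k * z ^ k) := by
  rw [uniformProb, card_powersetCard, card_univ, mul_comm, ← div_div]
  gcongr
  rw [le_div_iff₀ (by positivity), ← sum_pow_card_noFullRow, ← nsmul_eq_mul,
    ← sum_const]
  calc ∑ A ∈ powersetCard k univ with NoFullRow A, z ^ k
      = ∑ A ∈ powersetCard k univ with NoFullRow A, z ^ #A :=
        sum_congr rfl fun A hA => by rw [(mem_powersetCard.1 (mem_filter.1 hA).1).2]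
    _ ≤ ∑ A : Finset (ι × κ) with NoFullRow A, z ^ #A :=
        sum_le_sum_of_subset_of_nonneg (filter_subset_filter _ (subset_univ _))
          fun _ _ _ => by positivity

end GeneratingFunction

section RegularHypergraphs

variable {ι κ : Type*} [Fintype ι] [Fintype κ] {n r d : ℕ} {E : Finset (Finset (Fin n))}

lemma mem_regularFamily : E ∈ regularFamily n r d ↔
    (∀ e ∈ E, #e = r) ∧ ∀ v, #{e ∈ E | v ∈ e} = d := by
  simp [regularFamily]

lemma card_mul_of_mem_regularFamily (hE : E ∈ regularFamily n r d) : #E * r = d * n := by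
  obtain ⟨huniform, hregular⟩ := mem_regularFamily.1 hE
  calc #E * r = ∑ e ∈ E, #e := by rw [sum_congr rfl huniform, sum_const, smul_eq_mul]
    _ = Fintype.card (Fin n) * d := sum_card fun v => by convert hregular v
    _ = d * n := by rw [Fintype.card_fin, mul_comm]

lemma IsListing.edges_mem_regularFamily_iff {f : ι × κ → Fin n} (hf : IsListing f) :
    edges f ∈ regularFamily n (Fintype.card κ) d ↔ f ∈ configurations (ι × κ) (Fin n) d := by
  have huniform : ∀ e ∈ edges f, #e = Fintype.card κ := fun e he => by
    obtain ⟨i, rfl⟩ := mem_edges.1 he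
    exact card_row (hf.1 i)
  rw [mem_regularFamily, mem_configurations, and_iff_right huniform]
  refine forall_congr' fun v => ?_
  convert Iff.rfl using 2
  convert (hf.card_filter_mem_edges v).symm

lemma uniformProb_isListing_edges (hκ : 0 < Fintype.card κ)
    (hcard : Fintype.card (ι × κ) = d * n)
    (hne : {f ∈ configurations (ι × κ) (Fin n) d | IsListing f}.Nonempty)
    (Q : Finset (Finset (Fin n)) → Prop) :
    uniformProb {f ∈ configurations (ι × κ) (Fin n) d | IsListing f} (fun f => Q (edges f)) =
      uniformProb (regularFamily n (Fintype.card κ) d) Q := by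
  have hfiber : ∀ E ∈ regularFamily n (Fintype.card κ) d,
      #{f ∈ {f ∈ configurations (ι × κ) (Fin n) d | IsListing f} | edges f = E} =
        (Fintype.card ι).factorial * (Fintype.card κ).factorial ^ Fintype.card ι := by
    intro E hE
    have hEι : #E = Fintype.card ι := Nat.eq_of_mul_eq_mul_right hκ <| by
      rw [card_mul_of_mem_regularFamily hE, ← hcard, Fintype.card_prod]
    rw [← card_filter_isListing_edges_eq hEι (mem_regularFamily.1 hE).1, filter_filter]
    congr 1
    ext f
    simp only [mem_filter, mem_univ, true_and, and_iff_right_iff_imp]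
    rintro ⟨hf, rfl⟩
    exact hf.edges_mem_regularFamily_iff.1 hE
  refine uniformProb_comp_of_card_fiber_eq hne (fun f hf => ?_)
    (fun E hE E' hE' => (hfiber E hE).trans (hfiber E' hE').symm) Q
  obtain ⟨hfd, hf⟩ := mem_filter.1 hf
  exact hf.edges_mem_regularFamily_iff.2 hfd

lemma indepSet_edges_iff {f : ι × κ → Fin n} {S : Finset (Fin n)} :
    IndepSet (edges f) S ↔ NoFullRow (positions f S) := by
  simp only [IndepSet, NoFullRow, mem_edges, forall_exists_index, forall_apply_eq_imp_iff,
    not_subset, mem_positions]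
  refine forall_congr' fun i => ⟨?_, ?_⟩
  · rintro ⟨v, hv, hvS⟩
    obtain ⟨a, rfl⟩ := mem_row.1 hv
    exact ⟨a, hvS⟩
  · rintro ⟨a, ha⟩
    exact ⟨f (i, a), apply_mem_row f i a, ha⟩

lemma uniformProb_configurations_indepSet_le (hcard : Fintype.card (ι × κ) = d * n)
    (S : Finset (Fin n)) {z : ℝ} (hz : 0 < z) :
    uniformProb (configurations (ι × κ) (Fin n) d) (fun f => IndepSet (edges f) S) ≤
      ((z + 1) ^ Fintype.card κ - z ^ Fintype.card κ) ^ Fintype.card ι /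
        ((d * n).choose (d * #S) * z ^ (d * #S)) := by
  simp only [indepSet_edges_iff]
  rw [uniformProb_configurations_positions (by simpa using hcard) S NoFullRow,
    ← hcard]
  exact uniformProb_powersetCard_noFullRow_le hz _

lemma uniformProb_configurations_exists_indepSet_le (hcard : Fintype.card (ι × κ) = d * n)
    (s : ℕ) {z : ℝ} (hz : 0 < z) :
    uniformProb (configurations (ι × κ) (Fin n) d)
        (fun f => ∃ S ∈ powersetCard s univ, IndepSet (edges f) S) ≤
      n.choose s * (((z + 1) ^ Fintype.card κ - z ^ Fintype.card κ) ^ Fintype.card ι /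
        ((d * n).choose (d * s) * z ^ (d * s))) := by
  refine (uniformProb_exists_mem_le _ _ _).trans ((sum_le_card_nsmul _ _ _ fun S hS =>
    uniformProb_configurations_indepSet_le hcard S hz |>.trans_eq
      (by rw [mem_powersetCard_univ.1 hS])).trans_eq ?_)
  rw [card_powersetCard, card_univ, Fintype.card_fin, nsmul_eq_mul]

lemma regularFamily_nonempty (hr : 3 ≤ r) {m : ℕ} (hm : m * r = d * n)
    (hlarge : (d * r) ^ 2 < m) : (regularFamily n r d).Nonempty := by
  obtain ⟨f, hf⟩ := exists_isListing_mem_configurations (ι := Fin m) (κ := Fin r) (V := Fin n)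
    (d := d) (by simpa using hr) (by simpa using hlarge) (by simpa using hm)
  obtain ⟨hfd, hlist⟩ := mem_filter.1 hf
  exact ⟨edges f, by simpa using hlist.edges_mem_regularFamily_iff.2 hfd⟩

lemma uniformProb_regularFamily_exists_indepSet_le (hr : 3 ≤ r) {m : ℕ} (hm : m * r = d * n)
    (hlarge : (d * r) ^ 2 < m) (s : ℕ) {z : ℝ} (hz : 0 < z) :
    uniformProb (regularFamily n r d) (fun E => ∃ S ∈ powersetCard s univ, IndepSet E S) ≤
      (2 * ((d * n) ^ 2 + 1) ^ (2 * (d * r + 3 * (d * r) ^ 2)) : ℕ) *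
        (n.choose s * (((z + 1) ^ r - z ^ r) ^ m /
          ((d * n).choose (d * s) * z ^ (d * s)))) := by
  have hcard : Fintype.card (Fin m × Fin r) = d * n := by simpa using hm
  have hcard' : Fintype.card (Fin m × Fin r) = d * Fintype.card (Fin n) := by simpa using hm
  have hlist := card_configurations_le (ι := Fin m) (κ := Fin r) (V := Fin n) (d := d)
    (by simpa using hr) (by simpa using hlarge)
  have hne := exists_isListing_mem_configurations (ι := Fin m) (κ := Fin r)
    (by simpa using hr) (by simpa using hlarge) hcard'
  rw [hcard, Fintype.card_fin, ← mul_assoc] at hlist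
  calc uniformProb (regularFamily n r d) (fun E => ∃ S ∈ powersetCard s univ, IndepSet E S)
      = uniformProb {f ∈ configurations (Fin m × Fin r) (Fin n) d | IsListing f}
          fun f => ∃ S ∈ powersetCard s univ, IndepSet (edges f) S := by
        simpa using (uniformProb_isListing_edges (by simp; omega) hcard hne
          fun E => ∃ S ∈ powersetCard s univ, IndepSet E S).symm
    _ ≤ _ := uniformProb_filter_le (configurations_nonempty hcard') hlist _
    _ ≤ _ := by
        gcongr
        simpa using uniformProb_configurations_exists_indepSet_le hcard s hz

end RegularHypergraphs

section BinomialMode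

/-- The probability that a binomial random variable with parameters `n` and `c` equals `k`. -/
noncomputable def binomialWeight (n : ℕ) (c : ℝ) (k : ℕ) : ℝ :=
  n.choose k * (c ^ k * (1 - c) ^ (n - k))

lemma sum_binomialWeight (n : ℕ) (c : ℝ) : ∑ k ∈ range (n + 1), binomialWeight n c k = 1 := by
  calc ∑ k ∈ range (n + 1), binomialWeight n c k = (c + (1 - c)) ^ n := by
        rw [add_pow]
        exact sum_congr rfl fun k _ => mul_comm _ _
    _ = 1 := by rw [add_sub_cancel, one_pow]

lemma mul_binomialWeight_succ {n k : ℕ} (hk : k < n) (c : ℝ) :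
    (1 - c) * (k + 1) * binomialWeight n c (k + 1) = c * (n - k) * binomialWeight n c k := by
  obtain ⟨l, rfl⟩ := Nat.exists_eq_add_of_lt hk
  have hchoose : ((k + l + 1).choose (k + 1) : ℝ) * (k + 1) = (k + l + 1).choose k * (l + 1) := by
    have h := Nat.choose_succ_right_eq (k + l + 1) k
    rw [add_assoc k l 1, Nat.add_sub_cancel_left, ← add_assoc] at h
    exact_mod_cast h
  have hl : k + l + 1 - (k + 1) = l := by omega
  have hl' : k + l + 1 - k = l + 1 := by omega
  simp only [binomialWeight, hl, hl']
  push_cast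
  linear_combination c ^ (k + 1) * (1 - c) ^ (l + 1) * hchoose

variable {c : ℝ}

lemma binomialWeight_pos (hc0 : 0 < c) (hc1 : c < 1) {n k : ℕ} (hk : k ≤ n) :
    0 < binomialWeight n c k := by
  have hchoose := Nat.choose_pos hk
  have : 0 < 1 - c := sub_pos.2 hc1
  unfold binomialWeight
  positivity

lemma succ_le_of_binomialWeight_le_succ (hc0 : 0 < c) (hc1 : c < 1) {n k : ℕ} (hk : k < n)
    (h : binomialWeight n c k ≤ binomialWeight n c (k + 1)) : k + 1 ≤ c * (n + 1) := by
  have : 0 < 1 - c := sub_pos.2 hc1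
  have hratio : (1 - c) * (k + 1) * binomialWeight n c k ≤ c * (n - k) * binomialWeight n c k := by
    rw [← mul_binomialWeight_succ hk]
    gcongr
  linarith [le_of_mul_le_mul_right hratio (binomialWeight_pos hc0 hc1 hk.le)]

lemma le_succ_of_binomialWeight_succ_le (hc0 : 0 < c) (hc1 : c < 1) {n k : ℕ} (hk : k < n)
    (h : binomialWeight n c (k + 1) ≤ binomialWeight n c k) : c * (n + 1) ≤ k + 1 := by
  have : 0 < 1 - c := sub_pos.2 hc1
  have hratio : c * (n - k) * binomialWeight n c k ≤ (1 - c) * (k + 1) * binomialWeight n c k := by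
    rw [← mul_binomialWeight_succ hk]
    gcongr
  linarith [le_of_mul_le_mul_right hratio (binomialWeight_pos hc0 hc1 hk.le)]

lemma exists_binomial_mode (hc0 : 0 < c) (hc1 : c < 1) (n : ℕ) :
    ∃ s ≤ n, (s : ℝ) ≤ c * (n + 1) ∧ c * (n + 1) ≤ s + 1 ∧ 1 ≤ (n + 1) * binomialWeight n c s := by
  obtain ⟨s, hs, hmax⟩ := exists_max_image (range (n + 1)) (binomialWeight n c) ⟨0, by simp⟩
  simp only [mem_range, Nat.lt_succ_iff] at hs hmax
  refine ⟨s, hs, ?_, ?_, ?_⟩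
  · rcases s with - | k
    · rw [Nat.cast_zero]
      positivity
    · rw [Nat.cast_succ]
      exact succ_le_of_binomialWeight_le_succ hc0 hc1 hs (hmax k (by omega))
  · rcases hs.lt_or_eq with hlt | rfl
    · exact le_succ_of_binomialWeight_succ_le hc0 hc1 hlt (hmax (s + 1) hlt)
    · exact mul_le_of_le_one_left (by positivity) hc1.le
  · calc 1 = ∑ k ∈ range (n + 1), binomialWeight n c k := (sum_binomialWeight n c).symm
      _ ≤ #(range (n + 1)) • binomialWeight n c s :=
        sum_le_card_nsmul _ _ _ fun k hk => hmax k (Nat.lt_succ_iff.1 (mem_range.1 hk))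
      _ = (n + 1) * binomialWeight n c s := by simp [nsmul_eq_mul]

end BinomialMode

section Binomials

lemma choose_pow_le_choose_mul (n s d : ℕ) : n.choose s ^ d ≤ (d * n).choose (d * s) := by
  induction d with
  | zero => simp
  | succ d ih =>
    calc n.choose s ^ (d + 1) ≤ (d * n).choose (d * s) * n.choose s := by rw [pow_succ]; gcongr
      _ ≤ ∑ ij ∈ antidiagonal (d * s + s), (d * n).choose ij.1 * n.choose ij.2 :=
        single_le_sum (f := fun ij : ℕ × ℕ => (d * n).choose ij.1 * n.choose ij.2)
          (fun _ _ => Nat.zero_le _) (a := (d * s, s)) (by simp)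
      _ = ((d + 1) * n).choose ((d + 1) * s) := by
        rw [Nat.succ_mul, Nat.succ_mul, Nat.add_choose_eq]

lemma choose_le_pow_mul_choose_mul {n s d : ℕ} (hd : 0 < d) {x : ℝ} (hx : 0 ≤ x)
    (h : 1 ≤ n.choose s * x) :
    (n.choose s : ℝ) ≤ x ^ (d - 1) * (d * n).choose (d * s) := by
  obtain ⟨e, rfl⟩ := Nat.exists_eq_add_of_lt hd
  simp only [zero_add, Nat.add_sub_cancel]
  calc (n.choose s : ℝ) ≤ n.choose s * (n.choose s * x) ^ e :=
        le_mul_of_one_le_right (Nat.cast_nonneg _) (one_le_pow₀ h)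
    _ = x ^ e * (n.choose s : ℝ) ^ (e + 1) := by ring
    _ ≤ x ^ e * ((e + 1) * n).choose ((e + 1) * s) := by
        gcongr
        exact_mod_cast choose_pow_le_choose_mul n s (e + 1)

end Binomials

section Rate

/-- The exponential growth rate in `n` of the bound on the expected number of independent sets of
density `c`, with the generating function evaluated at `z`. -/
noncomputable def firstMomentRate (r d : ℕ) (c z : ℝ) : ℝ :=
  d / r * log ((z + 1) ^ r - z ^ r) - d * c * log z - (d - 1) * binEntropy c

variable {r d : ℕ} {c z : ℝ}

lemma binEntropy_eq_sub (c : ℝ) : binEntropy c = -(c * log c) - (1 - c) * log (1 - c) := by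
  rw [binEntropy, log_inv, log_inv]
  ring

lemma succ_pow_sub_pow_pos (hr : r ≠ 0) (hz : 0 < z) : 0 < (z + 1) ^ r - z ^ r :=
  sub_pos.2 (pow_lt_pow_left₀ (lt_add_one z) hz.le hr)

lemma firstMomentRate_eq (hr : 0 < r) (hd : 0 < d) (hc0 : 0 < c) (hc1 : c < 1) (hz : 0 < z) :
    firstMomentRate r d c z =
      (d : ℝ) / r * log (d / r) + d * c * log (d * c) + d * (1 - c) * log (d * (1 - c))
        - c * log c - (1 - c) * log (1 - c) - d * log d
        - d / r * log (d / (r * ((z + 1) ^ r - z ^ r))) - d * c * log z := by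
  have hc : 0 < 1 - c := sub_pos.2 hc1
  have hQ := succ_pow_sub_pow_pos hr.ne' hz
  rw [firstMomentRate, binEntropy_eq_sub, ← div_div, log_div (by positivity) hQ.ne',
    log_mul (by positivity) hc0.ne', log_mul (by positivity) hc.ne']
  ring

/- The exponent is affine in `s`, so only its value at `s = c * n` matters. -/
lemma pow_mul_pow_div_pow_eq_exp (hr : 0 < r) (hd : 0 < d) (hc0 : 0 < c) (hc1 : c < 1)
    (hz : 0 < z) {m n s : ℕ} (hm : m * r = d * n) (hs : s ≤ n) :
    (c ^ s * (1 - c) ^ (n - s)) ^ (d - 1) * (((z + 1) ^ r - z ^ r) ^ m / z ^ (d * s)) =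
      exp ((s - c * n) * ((d - 1) * (log c - log (1 - c)) - d * log z)) *
        exp (firstMomentRate r d c z) ^ n := by
  have : 0 < 1 - c := sub_pos.2 hc1
  have hQ := succ_pow_sub_pow_pos hr.ne' hz
  have hm' : (m : ℝ) = d * n / r := by
    rw [eq_div_iff (by positivity)]
    exact_mod_cast hm
  rw [← exp_nat_mul, ← exp_add, ← exp_log (by positivity : 0 < (c ^ s * (1 - c) ^ (n - s)) ^ (d - 1)
      * (((z + 1) ^ r - z ^ r) ^ m / z ^ (d * s))), log_mul (by positivity) (by positivity),
    log_div (by positivity) (by positivity), log_pow, log_pow, log_pow,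
    log_mul (by positivity) (by positivity), log_pow, log_pow, Nat.cast_sub hs,
    Nat.cast_pred hd, hm', firstMomentRate, binEntropy_eq_sub]
  push_cast
  congr 1
  ring

lemma exists_choose_mul_le (hr : 0 < r) (hd : 0 < d) (hc0 : 0 < c) (hc1 : c < 1) (hz : 0 < z)
    {m n : ℕ} (hm : m * r = d * n) :
    ∃ s : ℕ, (s : ℝ) < c * n + 1 ∧
      n.choose s * (((z + 1) ^ r - z ^ r) ^ m / ((d * n).choose (d * s) * z ^ (d * s))) ≤
        (n + 1) ^ (d - 1) * (exp |(d - 1) * (log c - log (1 - c)) - d * log z| *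
          exp (firstMomentRate r d c z) ^ n) := by
  have : 0 < 1 - c := sub_pos.2 hc1
  have hQ := succ_pow_sub_pow_pos hr.ne' hz
  obtain ⟨s, hs, hsc, hcs, hmode⟩ := exists_binomial_mode hc0 hc1 n
  refine ⟨s, by linarith, ?_⟩
  have hchoose : (0 : ℝ) < (d * n).choose (d * s) := by
    exact_mod_cast Nat.choose_pos (Nat.mul_le_mul_left d hs)
  have hratio := choose_le_pow_mul_choose_mul (n := n) (s := s) hd
    (x := (n + 1) * (c ^ s * (1 - c) ^ (n - s))) (by positivity)
    (hmode.trans_eq (by rw [binomialWeight]; ring))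
  set Y : ℝ := (d - 1) * (log c - log (1 - c)) - d * log z
  have hY : (s - c * n) * Y ≤ |Y| := by
    refine (le_abs_self _).trans ?_
    rw [abs_mul]
    exact mul_le_of_le_one_left (abs_nonneg Y) (abs_le.2 ⟨by linarith, by linarith⟩)
  calc n.choose s * (((z + 1) ^ r - z ^ r) ^ m / ((d * n).choose (d * s) * z ^ (d * s)))
      ≤ ((n + 1) * (c ^ s * (1 - c) ^ (n - s))) ^ (d - 1) * (d * n).choose (d * s) *
          (((z + 1) ^ r - z ^ r) ^ m / ((d * n).choose (d * s) * z ^ (d * s))) := by gcongr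
    _ = (n + 1) ^ (d - 1) * ((c ^ s * (1 - c) ^ (n - s)) ^ (d - 1) *
          (((z + 1) ^ r - z ^ r) ^ m / z ^ (d * s))) := by
        rw [mul_pow]
        field_simp
    _ = (n + 1) ^ (d - 1) * (exp ((s - c * n) * Y) * exp (firstMomentRate r d c z) ^ n) := by
        rw [pow_mul_pow_div_pow_eq_exp hr hd hc0 hc1 hz hm hs]
    _ ≤ (n + 1) ^ (d - 1) * (exp |Y| * exp (firstMomentRate r d c z) ^ n) := by gcongr

end Rate

section Asymptotics

variable {n r d : ℕ} {c z : ℝ}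

lemma exists_indepSet_of_le_independenceNumber {E : Finset (Finset (Fin n))} {s : ℕ}
    (hE : 0 < independenceNumber E) (hs : s ≤ independenceNumber E) :
    ∃ S ∈ powersetCard s univ, IndepSet E S := by
  have hne : {k : ℕ | ∃ S : Finset (Fin n), #S = k ∧ IndepSet E S}.Nonempty :=
    Set.nonempty_iff_ne_empty.2 fun h => by simp [independenceNumber, h] at hE
  have hbdd : BddAbove {k : ℕ | ∃ S : Finset (Fin n), #S = k ∧ IndepSet E S} :=
    ⟨n, by rintro _ ⟨S, rfl, -⟩; simpa using card_le_univ S⟩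
  obtain ⟨T, hT, hindep⟩ := Nat.sSup_mem hne hbdd
  obtain ⟨S, hST, hS⟩ := exists_subset_card_eq (hs.trans_eq hT.symm)
  exact ⟨S, mem_powersetCard_univ.2 hS, fun e he heS => hindep e he (heS.trans hST)⟩

lemma exists_uniformProb_not_independenceNumber_lt_le (hr : 3 ≤ r) (hd : 0 < d) (hc0 : 0 < c)
    (hc1 : c < 1) (hz : 0 < z) :
    ∃ (A : ℝ) (k : ℕ), ∀ n m : ℕ, m * r = d * n → (d * r) ^ 2 < m →
      uniformProb (regularFamily n r d) (fun E => ¬ (independenceNumber E : ℝ) < c * n) ≤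
        A * (n ^ k * exp (firstMomentRate r d c z) ^ n) := by
  set K := 2 * (d * r + 3 * (d * r) ^ 2)
  set B := exp |(d - 1) * (log c - log (1 - c)) - d * log z|
  refine ⟨2 * (2 * d ^ 2) ^ K * (2 ^ (d - 1) * B), 2 * K + (d - 1), fun n m hm hlarge => ?_⟩
  have hn : 0 < n := Nat.pos_of_mul_pos_left (hm ▸ Nat.mul_pos (by omega) (by omega))
  have hn1 : (1 : ℝ) ≤ n := by exact_mod_cast hn
  have hdn : (1 : ℝ) ≤ (d * n) ^ 2 := by exact_mod_cast Nat.one_le_pow 2 _ (Nat.mul_pos hd hn)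
  obtain ⟨s, hs, hmoment⟩ := exists_choose_mul_le (by omega) hd hc0 hc1 hz hm
  have hindep (E : Finset (Finset (Fin n))) (hE : ¬ (independenceNumber E : ℝ) < c * n) :
      ∃ S ∈ powersetCard s univ, IndepSet E S := by
    rw [not_lt] at hE
    refine exists_indepSet_of_le_independenceNumber ?_ (Nat.lt_succ_iff.1 ?_)
    · exact_mod_cast (by positivity : 0 < c * n).trans_le hE
    · exact_mod_cast hs.trans_le (by gcongr : c * n + 1 ≤ independenceNumber E + 1)
  calc uniformProb (regularFamily n r d) (fun E => ¬ (independenceNumber E : ℝ) < c * n)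
      ≤ uniformProb (regularFamily n r d) fun E => ∃ S ∈ powersetCard s univ, IndepSet E S :=
        uniformProb_mono fun E _ => hindep E
    _ ≤ (2 * ((d * n) ^ 2 + 1) ^ K : ℕ) * _ :=
        uniformProb_regularFamily_exists_indepSet_le hr hm hlarge s hz
    _ ≤ (2 * ((d * n) ^ 2 + 1) ^ K : ℕ) *
          ((n + 1) ^ (d - 1) * (B * exp (firstMomentRate r d c z) ^ n)) := by gcongr
    _ ≤ 2 * (2 * (d * n) ^ 2) ^ K *
          ((2 * n) ^ (d - 1) * (B * exp (firstMomentRate r d c z) ^ n)) := by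
        push_cast
        gcongr <;> linarith
    _ = 2 * (2 * d ^ 2) ^ K * (2 ^ (d - 1) * B) *
          (n ^ (2 * K + (d - 1)) * exp (firstMomentRate r d c z) ^ n) := by ring

lemma eventually_exists_mul_eq (hd : 0 < d) (M : ℕ) :
    ∀ᶠ n in atTop ⊓ principal {n | r ∣ d * n}, ∃ m, m * r = d * n ∧ M < m := by
  rw [eventually_inf_principal]
  filter_upwards [eventually_gt_atTop (M * r)] with n hn ⟨m, hm⟩
  rw [mul_comm r m] at hm
  refine ⟨m, hm.symm, lt_of_mul_lt_mul_right (a := r) ?_ r.zero_le⟩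
  exact (hn.trans_le (Nat.le_mul_of_pos_left n hd)).trans_eq hm

lemma tendsto_uniformProb_not_independenceNumber_lt (hr : 3 ≤ r) (hd : 0 < d) (hc0 : 0 < c)
    (hc1 : c < 1) (hz : 0 < z) (hrate : firstMomentRate r d c z < 0) :
    Tendsto
      (fun n : ℕ => uniformProb (regularFamily n r d) fun E => ¬ (independenceNumber E : ℝ) < c * n)
      (atTop ⊓ principal {n | r ∣ d * n}) (nhds 0) := by
  obtain ⟨A, k, hbound⟩ := exists_uniformProb_not_independenceNumber_lt_le hr hd hc0 hc1 hz
  have hlim : Tendsto (fun n : ℕ => A * (n ^ k * exp (firstMomentRate r d c z) ^ n))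
      atTop (nhds 0) := by
    simpa using (tendsto_pow_const_mul_const_pow_of_abs_lt_one k
      ((abs_exp _).trans_lt (exp_lt_one_iff.2 hrate))).const_mul A
  refine squeeze_zero' (Eventually.of_forall fun n => uniformProb_nonneg _ _) ?_
    (hlim.mono_left inf_le_left)
  filter_upwards [eventually_exists_mul_eq hd ((d * r) ^ 2)] with n ⟨m, hm, hlarge⟩
  exact hbound n m hm hlarge

end Asymptotics

theorem independence_number_upper_bound_criterion_general {r d : ℕ} (hr : 3 ≤ r) (hd : 0 < d)
    {c z : ℝ} (hc0 : 0 < c) (hc1 : c < 1) (hz : 0 < z) (hrate : firstMomentRate r d c z < 0) :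
    Tendsto
      (fun n : ℕ => uniformProb (regularFamily n r d) fun E => (independenceNumber E : ℝ) < c * n)
      (atTop ⊓ principal {n | r ∣ d * n}) (nhds 1) := by
  have hlim := (tendsto_uniformProb_not_independenceNumber_lt hr hd hc0 hc1 hz hrate).const_sub 1
  rw [sub_zero] at hlim
  refine hlim.congr' ?_
  filter_upwards [eventually_exists_mul_eq hd ((d * r) ^ 2)] with n ⟨m, hm, hlarge⟩
  rw [uniformProb_not (regularFamily_nonempty hr hm hlarge), sub_sub_cancel]

/-- Claim 4.2 of Bal–Bennett: if the entropy-type expression is negative then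
w.h.p. `α(H_r(n,d)) < c·n`. -/
theorem independence_number_upper_bound_criterion
    (r d : ℕ) (hr : 3 ≤ r) (hd : 2 ≤ d) (c : ℝ) (hc0 : 0 < c) (hc1 : c < ((r : ℝ) - 1) / r)
    (z₂ : ℝ) (hz₂pos : 0 < z₂)
    (hz₂ : z₂ * ((z₂ + 1) ^ (r - 1) - z₂ ^ (r - 1)) / ((z₂ + 1) ^ r - z₂ ^ r) = c)
    (z₁ : ℝ) (hz₁ : z₁ = (d : ℝ) / (r * ((z₂ + 1) ^ r - z₂ ^ r)))
    (h : ℝ → ℝ) (hh : ∀ x : ℝ, h x = x * Real.log x)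
    (hneg : h ((d : ℝ) / r) + h (d * c) + h (d * (1 - c)) - h c - h (1 - c) - h d
        - ((d : ℝ) / r) * Real.log z₁ - d * c * Real.log z₂ < 0) :
    Filter.Tendsto
      (fun n : ℕ =>
        uniformProb (regularFamily n r d)
          (fun E => (independenceNumber E : ℝ) < c * n))
      (Filter.atTop ⊓ Filter.principal {n : ℕ | r ∣ d * n}) (nhds 1) := by
  have hc1' : c < 1 := hc1.trans_le (div_le_one_of_le₀ (by linarith) r.cast_nonneg)
  simp only [hh, hz₁] at hneg
  exact independence_number_upper_bound_criterion_general hr (by omega) hc0 hc1' hz₂pos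
    ((firstMomentRate_eq (by omega) (by omega) hc0 hc1' hz₂pos).trans_lt hneg)
end

section
/- For every integer r ≥ 3 and every real number c with 0 < c < (r−1)/r, there exists a unique positive real number z such that z((z+1)^{r−1} − z^{r−1})/((z+1)^r − z^r) = c. -/
/-!
Dividing numerator and denominator by powers of `z + 1` and putting `t = z / (z + 1)`, the left-hand
side of the equation becomes `1 - s⁻¹`, where `s = (1 - t ^ r) / (1 - t)` is the slope of the secant
of `x ↦ x ^ r` through `t` and `1`. By strict convexity this slope increases strictly from `1` to
`r` as `t` runs over `(0, 1)`. Thus the left-hand side is a composite of three bijections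
`(0, ∞) → (0, 1) → (1, r) → (0, (r - 1) / r)`, and `r` need not be an integer.
-/

open Set Filter Topology

section LinearOrderedField

variable {𝕜 : Type*} [Field 𝕜] [LinearOrder 𝕜] [IsStrictOrderedRing 𝕜]

lemma strictMonoOn_slope_of_strictConvexOn {f : 𝕜 → 𝕜} {s : Set 𝕜} {a : 𝕜}
    (hf : StrictConvexOn 𝕜 s f) (ha : a ∈ s) : StrictMonoOn (slope f a) (s \ {a}) := by
  intro x hx y hy hxy
  simpa only [slope_def_field] using hf.secant_strict_mono ha hx.1 hy.1 hx.2 hy.2 hxy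

lemma bijOn_div_self_add_one : BijOn (fun x : 𝕜 ↦ x / (x + 1)) (Ioi 0) (Ioo 0 1) := by
  refine InvOn.bijOn (f' := fun y ↦ y / (1 - y)) ⟨fun x hx ↦ ?_, fun y hy ↦ ?_⟩
    (fun x hx ↦ ?_) fun y hy ↦ div_pos hy.1 (sub_pos.2 hy.2)
  · have : x + 1 ≠ 0 := (add_pos hx one_pos).ne'
    field_simp
    ring
  · have : 1 - y ≠ 0 := (sub_pos.2 hy.2).ne'
    field_simp
    ring
  · have hx1 : 0 < x + 1 := add_pos hx one_pos
    exact ⟨div_pos hx hx1, (div_lt_one hx1).2 (lt_add_one x)⟩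

lemma bijOn_one_sub_inv_Ioo {a b : 𝕜} (ha : 0 < a) (hb : 0 < b) :
    BijOn (fun x ↦ 1 - x⁻¹) (Ioo a b) (Ioo (1 - a⁻¹) (1 - b⁻¹)) := by
  refine InvOn.bijOn (f' := fun y ↦ (1 - y)⁻¹) ⟨fun x _ ↦ by simp, fun y _ ↦ by simp⟩
    (fun x hx ↦ ?_) fun y hy ↦ ?_
  · exact ⟨sub_lt_sub_left (inv_strictAnti₀ ha hx.1) 1,
      sub_lt_sub_left (inv_strictAnti₀ (ha.trans hx.1) hx.2) 1⟩
  · have hbound : b⁻¹ < 1 - y := lt_sub_comm.1 hy.2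
    have hpos : 0 < 1 - y := (inv_pos.2 hb).trans hbound
    exact ⟨(lt_inv_comm₀ ha hpos).2 (sub_lt_comm.1 hy.1), inv_lt_of_inv_lt₀ hb hbound⟩

end LinearOrderedField

lemma bijOn_slope_Ioo_of_strictConvexOn {f : ℝ → ℝ} {a b f' : ℝ} (hab : a < b)
    (hf : StrictConvexOn ℝ (Icc a b) f) (hfa : ContinuousWithinAt f (Ioi a) a)
    (hfb : HasDerivWithinAt f f' (Iio b) b) :
    BijOn (slope f b) (Ioo a b) (Ioo (slope f b a) f') := by
  have ha : a ∈ Icc a b := left_mem_Icc.2 hab.le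
  have hb : b ∈ Icc a b := right_mem_Icc.2 hab.le
  have hmono : StrictMonoOn (slope f b) (Icc a b \ {b}) :=
    strictMonoOn_slope_of_strictConvexOn hf hb
  have hsub : Ioo a b ⊆ Icc a b \ {b} := fun x hx ↦ ⟨Ioo_subset_Icc_self hx, hx.2.ne⟩
  have hcont : ContinuousOn (slope f b) (Ioo a b) := by
    have hfc : ContinuousOn f (Ioo a b) :=
      (hf.convexOn.subset Ioo_subset_Icc_self (convex_Ioo a b)).continuousOn isOpen_Ioo
    exact ((continuousOn_id.sub continuousOn_const).inv₀ fun x hx ↦ sub_ne_zero.2 hx.2.ne).smul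
      (hfc.sub continuousOn_const)
  have hlim_a : Tendsto (slope f b) (𝓝[>] a) (𝓝 (slope f b a)) :=
    ((continuousWithinAt_id.sub continuousWithinAt_const).inv₀ (sub_ne_zero.2 hab.ne)).smul
      (hfa.sub continuousWithinAt_const)
  have hlim_b : Tendsto (slope f b) (𝓝[<] b) (𝓝 f') :=
    (hasDerivWithinAt_iff_tendsto_slope' self_notMem_Iio).1 hfb
  refine ⟨fun x hx ↦ ⟨hmono ⟨ha, hab.ne⟩ (hsub hx) hx.1, ?_⟩, hmono.injOn.mono hsub, ?_⟩
  · rw [slope_comm]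
    exact hf.slope_lt_of_hasDerivWithinAt_Iio (Ioo_subset_Icc_self hx) hb hx.2 hfb
  · exact isPreconnected_Ioo.intermediate_value_Ioo
      (le_principal_iff.2 (Ioo_mem_nhdsGT hab)) (le_principal_iff.2 (Ioo_mem_nhdsLT hab))
      hcont hlim_a hlim_b

lemma bijOn_slope_rpow_one {r : ℝ} (hr : 1 < r) :
    BijOn (slope (fun x : ℝ ↦ x ^ r) 1) (Ioo 0 1) (Ioo 1 r) := by
  have hr0 : 0 < r := one_pos.trans hr
  have hslope : slope (fun x : ℝ ↦ x ^ r) 1 0 = 1 := by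
    simp [slope_def_field, Real.zero_rpow hr0.ne']
  have hderiv : HasDerivAt (fun x : ℝ ↦ x ^ r) r 1 := by
    simpa using Real.hasDerivAt_rpow_const (x := 1) (p := r) (.inl one_ne_zero)
  simpa only [hslope] using bijOn_slope_Ioo_of_strictConvexOn one_pos
    ((strictConvexOn_rpow hr).subset Icc_subset_Ici_self (convex_Icc 0 1))
    (Real.continuous_rpow_const hr0.le).continuousWithinAt hderiv.hasDerivWithinAt

lemma mul_rpow_sub_div_rpow_sub_eq_one_sub_inv_slope {r z : ℝ} (hr : r ≠ 0) (hz : 0 < z) :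
    z * ((z + 1) ^ (r - 1) - z ^ (r - 1)) / ((z + 1) ^ r - z ^ r) =
      1 - (slope (fun x : ℝ ↦ x ^ r) 1 (z / (z + 1)))⁻¹ := by
  have hz1 : 0 < z + 1 := add_pos hz one_pos
  have hden : (z + 1) ^ r - z ^ r ≠ 0 := fun h ↦ (lt_add_one z).ne'
    ((Real.rpow_left_inj hz1.le hz.le hr).1 (sub_eq_zero.1 h))
  have hslope : slope (fun x : ℝ ↦ x ^ r) 1 (z / (z + 1)) =
      (z + 1) * ((z + 1) ^ r - z ^ r) / (z + 1) ^ r := by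
    have hsub : z / (z + 1) - 1 = -(z + 1)⁻¹ := by
      field_simp
      ring
    rw [slope_def_field, hsub, Real.one_rpow, Real.div_rpow hz.le hz1.le]
    field_simp
    ring
  rw [hslope, Real.rpow_sub_one hz1.ne', Real.rpow_sub_one hz.ne']
  field_simp
  ring

lemma bijOn_mul_rpow_sub_div_rpow_sub {r : ℝ} (hr : 1 < r) :
    BijOn (fun z : ℝ ↦ z * ((z + 1) ^ (r - 1) - z ^ (r - 1)) / ((z + 1) ^ r - z ^ r))
      (Ioi 0) (Ioo 0 ((r - 1) / r)) := by
  have hr0 : 0 < r := one_pos.trans hr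
  have hcomp := (bijOn_one_sub_inv_Ioo one_pos hr0).comp
    ((bijOn_slope_rpow_one hr).comp bijOn_div_self_add_one)
  rw [inv_one, sub_self, ← one_div, one_sub_div hr0.ne'] at hcomp
  exact hcomp.congr fun z hz ↦ (mul_rpow_sub_div_rpow_sub_eq_one_sub_inv_slope hr0.ne' hz).symm

theorem exists_unique_z_general {r c : ℝ} (hr : 1 < r) (hc0 : 0 < c) (hc1 : c < (r - 1) / r) :
    ∃! z : ℝ, 0 < z ∧ z * ((z + 1) ^ (r - 1) - z ^ (r - 1)) / ((z + 1) ^ r - z ^ r) = c := by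
  have hbij := bijOn_mul_rpow_sub_div_rpow_sub hr
  obtain ⟨z, hz, hzc⟩ := hbij.surjOn ⟨hc0, hc1⟩
  exact ⟨z, ⟨hz, hzc⟩, fun y ⟨hy, hyc⟩ ↦ hbij.injOn hy hz (hyc.trans hzc.symm)⟩

/-- For every integer `r ≥ 3` and every real `c` with `0 < c < (r−1)/r`, there is a unique
positive real `z` with `z((z+1)^(r−1) − z^(r−1))/((z+1)^r − z^r) = c`. -/
theorem exists_unique_z (r : ℕ) (hr : 3 ≤ r) (c : ℝ) (hc0 : 0 < c)
    (hc1 : c < ((r : ℝ) - 1) / r) :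
    ∃! z : ℝ, 0 < z ∧ z * ((z + 1) ^ (r - 1) - z ^ (r - 1)) / ((z + 1) ^ r - z ^ r) = c := by
  simpa only [← Nat.cast_pred (show 0 < r by omega), Real.rpow_natCast] using
    exists_unique_z_general (r := r) (by exact_mod_cast (show 1 < r by omega)) hc0 hc1
end

section
/- Fix an integer r ≥ 3. There exist constants C > 0 and c₀ > 0 (depending only on r) such that for every real number c with 0 < c < c₀, the unique positive real number z₂ satisfying z₂((z₂+1)^{r−1} − z₂^{r−1})/((z₂+1)^r − z₂^r) = c satisfies |z₂ − c/(1−c)| ≤ C·c^r. -/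
/-!
Write `t = z₂ / (z₂ + 1)`. Dividing through by `(z₂ + 1) ^ (r - 1)` turns the equation into
`c / (1 - c) = z₂ (1 - t ^ (r - 1))`, so the error `z₂ - c / (1 - c)` is exactly
`z₂ t ^ (r - 1)`, which lies between `0` and `z₂ ^ r`. On the other hand Bernoulli's inequality
gives `1 - t ^ (r - 1) ≥ m (1 - t)` with `m = min 1 (r - 1)`, hence `c / (1 - c) ≥ m t`,
and therefore `z₂ = O(c)` for small `c`.
-/

/-- The left-hand side of the equation `zTwoRatio r z₂ = c` that defines `z₂`, with the exponent
`r` allowed to be real. -/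
noncomputable def zTwoRatio (r z : ℝ) : ℝ :=
  z * ((z + 1) ^ (r - 1) - z ^ (r - 1)) / ((z + 1) ^ r - z ^ r)

theorem min_one_mul_one_sub_le_one_sub_rpow {s t : ℝ} (hs : 0 ≤ s) (ht₀ : 0 ≤ t) (ht₁ : t ≤ 1) :
    min 1 s * (1 - t) ≤ 1 - t ^ s := by
  have hm : 0 ≤ min 1 s := le_min zero_le_one hs
  have bernoulli : t ^ min 1 s ≤ 1 + min 1 s * (t - 1) := by
    simpa using rpow_one_add_le_one_add_mul_self (s := t - 1) (by linarith) hm (min_le_left 1 s)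
  have exponent_le : t ^ s ≤ t ^ min 1 s :=
    Real.rpow_le_rpow_of_exponent_ge_of_imp ht₀ ht₁ (min_le_right 1 s) (by grind)
  linarith

section zTwoRatio

variable {r z : ℝ}

theorem zTwoRatio_div_one_sub (hr : 0 < r) (hz : 0 < z) :
    zTwoRatio r z / (1 - zTwoRatio r z) = z * (1 - (z / (z + 1)) ^ (r - 1)) := by
  have hz₁ : 0 < z + 1 := by linarith
  have hD : 0 < (z + 1) ^ r - z ^ r :=
    sub_pos.2 (Real.rpow_lt_rpow hz.le (lt_add_one z) hr)
  have one_sub : 1 - zTwoRatio r z = (z + 1) ^ (r - 1) / ((z + 1) ^ r - z ^ r) := by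
    rw [zTwoRatio, eq_div_iff hD.ne', sub_mul, div_mul_cancel₀ _ hD.ne',
      Real.rpow_sub_one hz₁.ne', Real.rpow_sub_one hz.ne']
    field_simp
    ring
  rw [one_sub, zTwoRatio, div_div_div_cancel_right₀ hD.ne', Real.div_rpow hz.le hz₁.le]
  field_simp

theorem abs_sub_zTwoRatio_div_one_sub_le (hr : 1 ≤ r) (hz : 0 < z) :
    |z - zTwoRatio r z / (1 - zTwoRatio r z)| ≤ z ^ r := by
  have error_eq : z - zTwoRatio r z / (1 - zTwoRatio r z) = z * (z / (z + 1)) ^ (r - 1) := by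
    rw [zTwoRatio_div_one_sub (by linarith) hz]
    ring
  rw [error_eq, abs_of_nonneg (by positivity)]
  calc z * (z / (z + 1)) ^ (r - 1)
      ≤ z * z ^ (r - 1) := by
        gcongr
        exact div_le_self hz.le (by linarith)
    _ = z ^ r := by rw [Real.rpow_sub_one hz.ne', mul_div_cancel₀ _ hz.ne']

theorem min_one_mul_le_zTwoRatio_div_one_sub (hr : 1 ≤ r) (hz : 0 < z) :
    min 1 (r - 1) * (z / (z + 1)) ≤ zTwoRatio r z / (1 - zTwoRatio r z) := by
  have ht₁ : z / (z + 1) ≤ 1 := div_le_one_of_le₀ (by linarith) (by linarith)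
  rw [zTwoRatio_div_one_sub (by linarith) hz]
  calc min 1 (r - 1) * (z / (z + 1))
      = z * (min 1 (r - 1) * (1 - z / (z + 1))) := by
        field_simp
        ring
    _ ≤ z * (1 - (z / (z + 1)) ^ (r - 1)) := by
        gcongr
        exact min_one_mul_one_sub_le_one_sub_rpow (by linarith) (by positivity) ht₁

theorem le_two_div_mul_zTwoRatio (hr : 1 < r) (hz : 0 < z)
    (hsmall : zTwoRatio r z ≤ min 1 (r - 1) / 4) :
    z ≤ 2 / min 1 (r - 1) * zTwoRatio r z := by
  have odds_ge := min_one_mul_le_zTwoRatio_div_one_sub hr.le hz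
  have hm : 0 < min 1 (r - 1) := lt_min one_pos (by linarith)
  have hm₁ : min 1 (r - 1) ≤ 1 := min_le_left _ _
  generalize min 1 (r - 1) = m at *
  generalize zTwoRatio r z = c at *
  have cross_mul : m * z * (1 - c) ≤ c * (z + 1) := by
    rwa [← mul_div_assoc, div_le_div_iff₀ (by linarith) (by linarith)] at odds_ge
  have lower : m * z * (3 / 4) ≤ m * z * (1 - c) := by
    gcongr
    linarith
  have upper : c * z ≤ m / 4 * z := by gcongr
  rw [div_mul_eq_mul_div, le_div_iff₀ hm]
  linarith

end zTwoRatio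

theorem z_two_estimate_general (r : ℝ) (hr : 1 < r) :
    ∃ C : ℝ, 0 < C ∧ ∃ c₀ : ℝ, 0 < c₀ ∧
      ∀ c : ℝ, c < c₀ →
        ∀ z₂ : ℝ, 0 < z₂ →
          z₂ * ((z₂ + 1) ^ (r - 1) - z₂ ^ (r - 1)) / ((z₂ + 1) ^ r - z₂ ^ r) = c →
          |z₂ - c / (1 - c)| ≤ C * c ^ r := by
  have hm : 0 < min 1 (r - 1) := lt_min one_pos (by linarith)
  refine ⟨(2 / min 1 (r - 1)) ^ r, Real.rpow_pos_of_pos (div_pos two_pos hm) r,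
    min 1 (r - 1) / 4, div_pos hm four_pos, ?_⟩
  intro c hc z hz hzc
  obtain rfl : zTwoRatio r z = c := hzc
  have z_le := le_two_div_mul_zTwoRatio hr hz hc.le
  have ratio_pos : 0 < zTwoRatio r z := pos_of_mul_pos_right (hz.trans_le z_le) (by positivity)
  calc |z - zTwoRatio r z / (1 - zTwoRatio r z)|
      ≤ z ^ r := abs_sub_zTwoRatio_div_one_sub_le hr.le hz
    _ ≤ (2 / min 1 (r - 1) * zTwoRatio r z) ^ r := by gcongr
    _ = (2 / min 1 (r - 1)) ^ r * zTwoRatio r z ^ r :=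
        Real.mul_rpow (by positivity) ratio_pos.le

/-- Fix an integer `r ≥ 3`. There are constants `C > 0` and `c₀ > 0` such that for every
`0 < c < c₀`, the unique positive real `z₂` with
`z₂((z₂+1)^(r−1) − z₂^(r−1))/((z₂+1)^r − z₂^r) = c` satisfies `|z₂ − c/(1−c)| ≤ C·c^r`. -/
theorem z_two_estimate (r : ℕ) (hr : 3 ≤ r) :
    ∃ C : ℝ, 0 < C ∧ ∃ c₀ : ℝ, 0 < c₀ ∧
      ∀ c : ℝ, 0 < c → c < c₀ →
        ∀ z₂ : ℝ, 0 < z₂ →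
          z₂ * ((z₂ + 1) ^ (r - 1) - z₂ ^ (r - 1)) / ((z₂ + 1) ^ r - z₂ ^ r) = c →
          |z₂ - c / (1 - c)| ≤ C * c ^ r := by
  obtain ⟨C, hC, c₀, hc₀, h⟩ := z_two_estimate_general r (by norm_cast; lia)
  simp only [← Nat.cast_pred (show 0 < r by lia), Real.rpow_natCast] at h
  exact ⟨C, hC, c₀, hc₀, fun c _ ↦ h c⟩
end

section
/- For every integer r ≥ 3 and every ε > 0 there exists d₀ = d₀(r, ε) such that for every real d ≥ d₀ the following holds. Let c := (1+ε)(r log d/((r−1)d))^{1/(r−1)}, let z₂ be the unique positive real number satisfying z₂((z₂+1)^{r−1} − z₂^{r−1})/((z₂+1)^r − z₂^r) = c, let z₁ := d/(r((z₂+1)^r − z₂^r)), and let h(x) := x log x. Then h(d/r) + h(dc) + h(d(1−c)) − h(c) − h(1−c) − h(d) − (d/r) log z₁ − dc log z₂ < 0. -/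
/-!
Put `y = z₂ / (z₂ + 1)`. The equation for `z₂` says `c = (y - y ^ r) / (1 - y ^ r)`, and the
expression collapses to `H(c) + d g`, where `H` is the binary entropy and
`g = c log (1 - y ^ (r - 1)) - (1 - 1 / r) log (1 - y ^ r)`. The bounds `1 - 1 / x ≤ log x ≤ x - 1`
give `g ≤ -(y ^ r / (1 - y ^ r)) (1 / r - y ^ (r - 1))`. As `c ≤ y ≤ r c / (r - 1)` and
`H(c) ≤ c (1 - log c)`, it suffices that
`1 - log c < d c ^ (r - 1) (1 / r - (r c / (r - 1)) ^ (r - 1))`.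

For the given `c` the right side is asymptotic to `(1 + ε) ^ (r - 1) log d / (r - 1)`, because
`d c ^ (r - 1) = (1 + ε) ^ (r - 1) r log d / (r - 1)` and `c → 0`. The left side is eventually at
most `log d / (r - 1)`, so the factor `(1 + ε) ^ (r - 1) > 1` decides the comparison.
-/

open Filter Real Topology

lemma div_add_one_mem_Ioo {z : ℝ} (hz : 0 < z) : z / (z + 1) ∈ Set.Ioo (0 : ℝ) 1 :=
  ⟨by positivity, (div_lt_one (by positivity)).2 (lt_add_one z)⟩

lemma add_one_rpow_sub_rpow {z : ℝ} (hz : 0 ≤ z) (p : ℝ) :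
    (z + 1) ^ p - z ^ p = (z + 1) ^ p * (1 - (z / (z + 1)) ^ p) := by
  rw [div_rpow hz (by positivity)]
  field_simp

lemma add_one_rpow_sub_rpow_pos {z p : ℝ} (hz : 0 ≤ z) (hp : 0 < p) :
    0 < (z + 1) ^ p - z ^ p :=
  sub_pos.2 (rpow_lt_rpow hz (lt_add_one z) hp)

lemma log_one_sub_le_neg {x : ℝ} (hx : x < 1) : log (1 - x) ≤ -x := by
  linarith [log_le_sub_one_of_pos (sub_pos.2 hx)]

lemma neg_log_one_sub_le_div {x : ℝ} (hx : x < 1) : -log (1 - x) ≤ x / (1 - x) := by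
  have hx' : 0 < 1 - x := sub_pos.2 hx
  have h : x / (1 - x) = -(1 - (1 - x)⁻¹) := by
    field_simp
    ring
  linarith [one_sub_inv_le_log_of_pos hx']

lemma binEntropy_le_mul_one_sub_log {c : ℝ} (hc : c ≤ 1) : binEntropy c ≤ c * (1 - log c) := by
  have h := negMulLog_le_one_sub_self (sub_nonneg.2 hc)
  rw [binEntropy_eq_negMulLog_add_negMulLog_one_sub, negMulLog]
  linarith

lemma mul_rpow_sub_one_le {r y : ℝ} (hr : 1 ≤ r) (hy : 0 ≤ y) :
    r * y ^ (r - 1) ≤ (r - 1) * y ^ r + 1 := by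
  have hr0 : 0 < r := by linarith
  have h := geom_mean_le_arith_mean2_weighted (w₁ := (r - 1) / r) (w₂ := 1 / r)
    (div_nonneg (sub_nonneg.2 hr) hr0.le) (by positivity) (rpow_nonneg hy r) zero_le_one
    (by field_simp; ring)
  rw [one_rpow, mul_one, ← rpow_mul hy, mul_div_cancel₀ _ hr0.ne'] at h
  calc r * y ^ (r - 1) ≤ r * ((r - 1) / r * y ^ r + 1 / r * 1) := by gcongr
    _ = (r - 1) * y ^ r + 1 := by field_simp

/-- The density `c` as a function of `y = z₂ / (z₂ + 1)`. For integer `r` it is the probability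
that the first of `r` independent Bernoulli(`y`) trials succeeds, given that not all of them do. -/
noncomputable def tiltedDensity (r y : ℝ) : ℝ := (y - y ^ r) / (1 - y ^ r)

section TiltedDensity

variable {r y : ℝ}

lemma one_sub_rpow_pos (hr : 0 < r) (hy : y ∈ Set.Ioo 0 1) : 0 < 1 - y ^ r :=
  sub_pos.2 (rpow_lt_one hy.1.le hy.2 hr)

lemma mul_one_sub_rpow_sub_one (hy : y ≠ 0) : y * (1 - y ^ (r - 1)) = y - y ^ r := by
  rw [rpow_sub_one hy]
  field_simp

lemma tiltedDensity_div_add_one {z : ℝ} (hz : 0 < z) :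
    tiltedDensity r (z / (z + 1)) =
      z * ((z + 1) ^ (r - 1) - z ^ (r - 1)) / ((z + 1) ^ r - z ^ r) := by
  have hy := (div_add_one_mem_Ioo hz).1.ne'
  have hw : (z + 1) ^ r ≠ 0 := by positivity
  rw [add_one_rpow_sub_rpow hz.le, add_one_rpow_sub_rpow hz.le, tiltedDensity,
    ← mul_one_sub_rpow_sub_one hy, rpow_sub_one (by positivity : z + 1 ≠ 0),
    ← mul_div_mul_left _ (1 - (z / (z + 1)) ^ r) hw]
  congr 1
  ring

lemma one_sub_tiltedDensity (hr : 0 < r) (hy : y ∈ Set.Ioo 0 1) :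
    1 - tiltedDensity r y = (1 - y) / (1 - y ^ r) := by
  have h := (one_sub_rpow_pos hr hy).ne'
  rw [tiltedDensity]
  field_simp
  ring

lemma tiltedDensity_mem_Ioo (hr : 1 < r) (hy : y ∈ Set.Ioo 0 1) :
    tiltedDensity r y ∈ Set.Ioo 0 1 := by
  have h := one_sub_rpow_pos (by linarith) hy
  refine ⟨div_pos (sub_pos.2 (rpow_lt_self_of_lt_one hy.1 hy.2 hr)) h, (div_lt_one h).2 ?_⟩
  linarith [hy.2]

lemma tiltedDensity_le_self (hr : 0 < r) (hy : y ∈ Set.Ioo 0 1) : tiltedDensity r y ≤ y := by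
  rw [tiltedDensity, div_le_iff₀ (one_sub_rpow_pos hr hy)]
  linarith [mul_le_of_le_one_left (rpow_nonneg hy.1.le r) hy.2.le]

lemma self_le_mul_tiltedDensity_div (hr : 1 < r) (hy : y ∈ Set.Ioo 0 1) :
    y ≤ r * tiltedDensity r y / (r - 1) := by
  have h := mul_le_mul_of_nonneg_left (mul_rpow_sub_one_le hr.le hy.1.le) hy.1.le
  rw [le_div_iff₀ (sub_pos.2 hr), tiltedDensity, ← mul_div_assoc,
    le_div_iff₀ (one_sub_rpow_pos (by linarith) hy), ← mul_one_sub_rpow_sub_one hy.1.ne']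
  linarith

lemma log_tiltedDensity (hr : 1 < r) (hy : y ∈ Set.Ioo 0 1) :
    log (tiltedDensity r y) = log y + log (1 - y ^ (r - 1)) - log (1 - y ^ r) := by
  have h := (one_sub_rpow_pos (sub_pos.2 hr) hy).ne'
  rw [tiltedDensity, ← mul_one_sub_rpow_sub_one hy.1.ne',
    log_div (mul_ne_zero hy.1.ne' h) (one_sub_rpow_pos (by linarith) hy).ne',
    log_mul hy.1.ne' h]

lemma log_one_sub_tiltedDensity (hr : 0 < r) (hy : y ∈ Set.Ioo 0 1) :
    log (1 - tiltedDensity r y) = log (1 - y) - log (1 - y ^ r) := by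
  rw [one_sub_tiltedDensity hr hy,
    log_div (sub_pos.2 hy.2).ne' (one_sub_rpow_pos hr hy).ne']

end TiltedDensity

/-- The coefficient of `d` in the expression, once the terms in `d log d` have cancelled. -/
noncomputable def growthRate (r z c : ℝ) : ℝ :=
  log ((z + 1) ^ r - z ^ r) / r - c * log z - binEntropy c

lemma expression_eq_binEntropy_add_mul_growthRate {r d z : ℝ} (hr : 0 < r) (hd : d ≠ 0)
    (hz : 0 < z) (c : ℝ) {h : ℝ → ℝ} (hh : ∀ x, h x = x * log x) :
    h (d / r) + h (d * c) + h (d * (1 - c)) - h c - h (1 - c) - h d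
        - d / r * log (d / (r * ((z + 1) ^ r - z ^ r))) - d * c * log z
      = binEntropy c + d * growthRate r z c := by
  obtain rfl : h = fun x ↦ -negMulLog x := by
    ext x
    simp [hh, negMulLog]
  have hlog : log (d / (r * ((z + 1) ^ r - z ^ r))) =
      log (d / r) - log ((z + 1) ^ r - z ^ r) := by
    rw [← div_div, log_div (div_ne_zero hd hr.ne') (add_one_rpow_sub_rpow_pos hz.le hr).ne']
  simp only [hlog, growthRate, binEntropy_eq_negMulLog_add_negMulLog_one_sub, negMulLog_mul d]
  rw [negMulLog.eq_1 (d / r)]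
  ring

lemma growthRate_tiltedDensity {r z : ℝ} (hr : 1 < r) (hz : 0 < z) :
    growthRate r z (tiltedDensity r (z / (z + 1))) =
      tiltedDensity r (z / (z + 1)) * log (1 - (z / (z + 1)) ^ (r - 1))
        - (1 - 1 / r) * log (1 - (z / (z + 1)) ^ r) := by
  have hr0 : 0 < r := by linarith
  have hw : 0 < z + 1 := by linarith
  have hy := div_add_one_mem_Ioo hz
  have hlogF : log ((z + 1) ^ r - z ^ r) = r * log (z + 1) + log (1 - (z / (z + 1)) ^ r) := by
    rw [add_one_rpow_sub_rpow hz.le,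
      log_mul (by positivity) (one_sub_rpow_pos hr0 hy).ne', log_rpow hw]
  have hlog_one_sub : log (1 - z / (z + 1)) = -log (z + 1) := by
    rw [one_sub_div hw.ne', add_sub_cancel_left, one_div, log_inv]
  rw [growthRate, binEntropy_eq_negMulLog_add_negMulLog_one_sub, negMulLog, negMulLog,
    log_tiltedDensity hr hy, log_one_sub_tiltedDensity hr0 hy, hlogF, hlog_one_sub,
    log_div hz.ne' hw.ne', add_div, mul_div_cancel_left₀ _ hr0.ne']
  ring

lemma tiltedDensity_mul_log_sub_le {r y : ℝ} (hr : 1 < r) (hy : y ∈ Set.Ioo 0 1) :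
    tiltedDensity r y * log (1 - y ^ (r - 1)) - (1 - 1 / r) * log (1 - y ^ r) ≤
      -(y ^ r / (1 - y ^ r) * (1 / r - y ^ (r - 1))) := by
  have hr0 : 0 < r := by linarith
  have hlog₁ : log (1 - y ^ (r - 1)) ≤ -y ^ (r - 1) :=
    log_one_sub_le_neg (rpow_lt_one hy.1.le hy.2 (sub_pos.2 hr))
  have hlog₂ : -log (1 - y ^ r) ≤ y ^ r / (1 - y ^ r) :=
    neg_log_one_sub_le_div (rpow_lt_one hy.1.le hy.2 hr0)
  have hc : tiltedDensity r y * y ^ (r - 1) = y ^ r / (1 - y ^ r) * (1 - y ^ (r - 1)) := by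
    have := hy.1.ne'
    rw [tiltedDensity, rpow_sub_one this]
    field_simp
  have h₁ := mul_le_mul_of_nonneg_left hlog₁ (tiltedDensity_mem_Ioo hr hy).1.le
  have h₂ := mul_le_mul_of_nonneg_left hlog₂ (sub_nonneg.2 ((div_le_one hr0).2 hr.le))
  linarith

lemma tiltedDensity_rpow_mul_sub_le {r y : ℝ} (hr : 1 < r) (hy : y ∈ Set.Ioo 0 1)
    (hle : (r * tiltedDensity r y / (r - 1)) ^ (r - 1) ≤ 1 / r) :
    tiltedDensity r y ^ r * (1 / r - (r * tiltedDensity r y / (r - 1)) ^ (r - 1)) ≤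
      y ^ r / (1 - y ^ r) * (1 / r - y ^ (r - 1)) := by
  have hr0 : 0 < r := by linarith
  have hyr : 0 ≤ y ^ r := rpow_nonneg hy.1.le r
  have hpow : tiltedDensity r y ^ r ≤ y ^ r / (1 - y ^ r) :=
    calc tiltedDensity r y ^ r ≤ y ^ r :=
          rpow_le_rpow (tiltedDensity_mem_Ioo hr hy).1.le (tiltedDensity_le_self hr0 hy) hr0.le
      _ ≤ y ^ r / (1 - y ^ r) :=
          le_div_self hyr (one_sub_rpow_pos hr0 hy) (sub_le_self 1 hyr)
  have hpow_sub_one : y ^ (r - 1) ≤ (r * tiltedDensity r y / (r - 1)) ^ (r - 1) :=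
    rpow_le_rpow hy.1.le (self_le_mul_tiltedDensity_div hr hy) (sub_pos.2 hr).le
  exact mul_le_mul hpow (sub_le_sub_left hpow_sub_one _) (sub_nonneg.2 hle)
    (div_nonneg hyr (one_sub_rpow_pos hr0 hy).le)

lemma growthRate_le_of_tiltedDensity_eq {r z c : ℝ} (hr : 1 < r) (hz : 0 < z)
    (hc : tiltedDensity r (z / (z + 1)) = c) (hle : (r * c / (r - 1)) ^ (r - 1) ≤ 1 / r) :
    growthRate r z c ≤ -(c ^ r * (1 / r - (r * c / (r - 1)) ^ (r - 1))) := by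
  subst hc
  have hy := div_add_one_mem_Ioo hz
  rw [growthRate_tiltedDensity hr hz]
  exact (tiltedDensity_mul_log_sub_le hr hy).trans
    (neg_le_neg (tiltedDensity_rpow_mul_sub_le hr hy hle))

lemma binEntropy_add_mul_growthRate_neg_of_lt {r d z c : ℝ} (hr : 1 < r) (hd : 0 ≤ d) (hz : 0 < z)
    (hc : tiltedDensity r (z / (z + 1)) = c)
    (hlt : 1 - log c < d * c ^ (r - 1) * (1 / r - (r * c / (r - 1)) ^ (r - 1))) :
    binEntropy c + d * growthRate r z c < 0 := by
  have ⟨hc0, hc1⟩ : c ∈ Set.Ioo 0 1 := hc ▸ tiltedDensity_mem_Ioo hr (div_add_one_mem_Ioo hz)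
  have hgap : 0 < 1 / r - (r * c / (r - 1)) ^ (r - 1) :=
    pos_of_mul_pos_right ((by linarith [log_neg hc0 hc1] : 0 < 1 - log c).trans hlt)
      (by positivity)
  calc binEntropy c + d * growthRate r z c
      ≤ c * (1 - log c) + d * -(c ^ r * (1 / r - (r * c / (r - 1)) ^ (r - 1))) := by
        gcongr
        · exact binEntropy_le_mul_one_sub_log hc1.le
        · exact growthRate_le_of_tiltedDensity_eq hr hz hc (sub_pos.1 hgap).le
    _ = c * (1 - log c - d * c ^ (r - 1) * (1 / r - (r * c / (r - 1)) ^ (r - 1))) := by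
        rw [show c ^ r = c ^ (r - 1) * c by rw [← rpow_add_one hc0.ne', sub_add_cancel]]
        ring
    _ < 0 := mul_neg_of_pos_of_neg hc0 (sub_neg.2 hlt)

/-- The density `c` of the theorem as a function of `d`, with `a` in place of `1 + ε`. -/
noncomputable def thresholdDensity (r a d : ℝ) : ℝ :=
  a * (r * log d / ((r - 1) * d)) ^ (1 / (r - 1))

section ThresholdDensity

variable {r a d : ℝ}

lemma thresholdDensity_pos (hr : 1 < r) (ha : 0 < a) (hd : 1 < d) :
    0 < thresholdDensity r a d := by
  have := log_pos hd
  have := sub_pos.2 hr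
  rw [thresholdDensity]
  positivity

lemma mul_thresholdDensity_rpow (hr : 1 < r) (ha : 0 ≤ a) (hd : 1 < d) :
    d * thresholdDensity r a d ^ (r - 1) = a ^ (r - 1) * (r / (r - 1)) * log d := by
  have := log_pos hd
  have := sub_pos.2 hr
  rw [thresholdDensity, mul_rpow ha (by positivity), one_div,
    rpow_inv_rpow (by positivity) (by positivity)]
  field_simp

lemma tendsto_thresholdDensity (hr : 1 < r) (a : ℝ) :
    Tendsto (thresholdDensity r a) atTop (𝓝 0) := by
  have hexp : 0 < 1 / (r - 1) := one_div_pos.2 (sub_pos.2 hr)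
  have hlog : Tendsto (fun d ↦ log d / d) atTop (𝓝 0) :=
    isLittleO_log_id_atTop.tendsto_div_nhds_zero
  have hbase : Tendsto (fun d ↦ r * log d / ((r - 1) * d)) atTop (𝓝 0) := by
    simpa [mul_div_mul_comm] using hlog.const_mul (r / (r - 1))
  simpa only [mul_zero] using! (hbase.rpow_const_nhds_zero hexp).const_mul a

lemma eventually_one_sub_log_thresholdDensity_le (hr : 1 < r) (ha : 0 < a) :
    ∀ᶠ d in atTop, 1 - log (thresholdDensity r a d) ≤ log d / (r - 1) := by
  have hr' := sub_pos.2 hr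
  have hK : 0 < a ^ (r - 1) * (r / (r - 1)) := by positivity
  have htendsto : Tendsto (fun d ↦ log (a ^ (r - 1) * (r / (r - 1)) * log d)) atTop atTop :=
    tendsto_log_atTop.comp (tendsto_log_atTop.const_mul_atTop hK)
  filter_upwards [htendsto.eventually_ge_atTop (r - 1), eventually_gt_atTop 1] with d hlarge hd
  have hc := thresholdDensity_pos hr ha hd
  rw [← mul_thresholdDensity_rpow hr ha.le hd, log_mul (by positivity) (by positivity),
    log_rpow hc] at hlarge
  rw [le_div_iff₀ hr']
  linarith

lemma eventually_one_sub_log_thresholdDensity_lt (hr : 1 < r) (ha : 1 < a) :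
    ∀ᶠ d in atTop, 1 - log (thresholdDensity r a d) <
      d * thresholdDensity r a d ^ (r - 1) *
        (1 / r - (r * thresholdDensity r a d / (r - 1)) ^ (r - 1)) := by
  have ha0 : 0 < a := by linarith
  have hr' := sub_pos.2 hr
  have hpow : Tendsto (fun d ↦ (r * thresholdDensity r a d / (r - 1)) ^ (r - 1)) atTop (𝓝 0) := by
    refine Tendsto.rpow_const_nhds_zero ?_ hr'
    simpa using ((tendsto_thresholdDensity hr a).const_mul r).div_const (r - 1)
  have hfactor : Tendsto
      (fun d ↦ a ^ (r - 1) * (1 - r * (r * thresholdDensity r a d / (r - 1)) ^ (r - 1)))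
      atTop (𝓝 (a ^ (r - 1))) := by
    simpa using ((hpow.const_mul r).const_sub 1).const_mul (a ^ (r - 1))
  filter_upwards [eventually_one_sub_log_thresholdDensity_le hr ha0, eventually_gt_atTop 1,
    hfactor.eventually_const_lt (one_lt_rpow ha hr')] with d hle hd hfactor_gt
  calc 1 - log (thresholdDensity r a d) ≤ log d / (r - 1) := hle
    _ < log d / (r - 1) *
        (a ^ (r - 1) * (1 - r * (r * thresholdDensity r a d / (r - 1)) ^ (r - 1))) :=
      lt_mul_of_one_lt_right (div_pos (log_pos hd) hr') hfactor_gt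
    _ = _ := by
      rw [mul_thresholdDensity_rpow hr ha0.le hd]
      field_simp

end ThresholdDensity

theorem entropy_expression_negative_general {r ε : ℝ} (hr : 1 < r) (hε : 0 < ε) :
    ∃ d₀ : ℝ, ∀ d : ℝ, d₀ ≤ d →
      ∀ c : ℝ, c = (1 + ε) * (r * log d / ((r - 1) * d)) ^ (1 / (r - 1)) →
        ∀ z₂ : ℝ, 0 < z₂ →
          z₂ * ((z₂ + 1) ^ (r - 1) - z₂ ^ (r - 1)) / ((z₂ + 1) ^ r - z₂ ^ r) = c →
          ∀ z₁ : ℝ, z₁ = d / (r * ((z₂ + 1) ^ r - z₂ ^ r)) →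
            ∀ h : ℝ → ℝ, (∀ x, h x = x * log x) →
              h (d / r) + h (d * c) + h (d * (1 - c)) - h c - h (1 - c) - h d
                  - d / r * log z₁ - d * c * log z₂ < 0 := by
  obtain ⟨d₀, hd₀⟩ := eventually_atTop.1
    ((eventually_one_sub_log_thresholdDensity_lt hr (lt_add_of_pos_right 1 hε)).and
      (eventually_gt_atTop 0))
  refine ⟨d₀, fun d hd c hc z₂ hz₂ hz₂c z₁ hz₁ h hh ↦ ?_⟩
  obtain ⟨hlt, hd_pos⟩ := hd₀ d hd
  obtain rfl : c = thresholdDensity r (1 + ε) d := hc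
  rw [hz₁, expression_eq_binEntropy_add_mul_growthRate (by linarith) hd_pos.ne' hz₂ _ hh]
  exact binEntropy_add_mul_growthRate_neg_of_lt hr hd_pos.le hz₂
    ((tiltedDensity_div_add_one hz₂).trans hz₂c) hlt

/-- For every integer `r ≥ 3` and `ε > 0` there is `d₀` such that for every real `d ≥ d₀`,
with `c = (1+ε)(r log d/((r−1)d))^(1/(r−1))`, `z₂` the unique positive solution of
`z₂((z₂+1)^(r−1) − z₂^(r−1))/((z₂+1)^r − z₂^r) = c`, `z₁ = d/(r((z₂+1)^r − z₂^r))` and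
`h(x) = x log x`, the entropy-type expression is negative. -/
theorem entropy_expression_negative (r : ℕ) (hr : 3 ≤ r) (ε : ℝ) (hε : 0 < ε) :
    ∃ d₀ : ℝ, ∀ d : ℝ, d₀ ≤ d →
      ∀ c : ℝ,
        c = (1 + ε) * ((r * Real.log d / (((r : ℝ) - 1) * d)) ^ ((1 : ℝ) / ((r : ℝ) - 1))) →
        ∀ z₂ : ℝ, 0 < z₂ →
          z₂ * ((z₂ + 1) ^ (r - 1) - z₂ ^ (r - 1)) / ((z₂ + 1) ^ r - z₂ ^ r) = c →
          ∀ z₁ : ℝ, z₁ = d / (r * ((z₂ + 1) ^ r - z₂ ^ r)) →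
            ∀ h : ℝ → ℝ, (∀ x : ℝ, h x = x * Real.log x) →
              h (d / r) + h (d * c) + h (d * (1 - c)) - h c - h (1 - c) - h d
                  - (d / r) * Real.log z₁ - d * c * Real.log z₂ < 0 := by
  simpa [← rpow_natCast, Nat.cast_sub (by omega : 1 ≤ r)] using
    entropy_expression_negative_general (r := r) (by exact_mod_cast (by omega : 1 < r)) hε
end
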